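/- arXiv:2305.08280 — 3 statements merged into one kernel-verified Lean document; each statement's English description precedes it below -/
import Mathlib

section
/- Let a, b, δ ∈ ℝ, h > 0, β > 0, set μ = (a−1)² − 4b, and let λ₋ = ((1−a) − √μ)/2 ∈ ℂ, where √μ denotes the principal square root (so Re √μ ≥ 0). Then there exists a nonzero twice continuously differentiable function u : (0,∞) → ℂ satisfying x² u''(x) + a x u'(x) + (b − h x^{2β}) u(x) = 0 for all x > 0 and ∫₀^∞ |u(x)|² x^{−2δ} dx < ∞, if and only if Re λ₋ − δ > −1/2. Equivalently, the operator T = x²∂ₓ² + a x ∂ₓ + (b − h x^{2β}) is injective on x^δ L²((0,∞), dx) if and only if Re λ₋ ≤ δ − 1/2, where λ₋ is the root of the indicial polynomial λ² + (a−1)λ + b with the smaller real part. -/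
open MeasureTheory Complex Real Set

noncomputable section


theorem aux_mono_Ici {f f' : ℝ → ℝ} (hf : ∀ t, HasDerivAt f (f' t) t) (T : ℝ)
    (h0 : ∀ t, T ≤ t → 0 ≤ f' t) {s t : ℝ} (hs : T ≤ s) (hst : s ≤ t) : f s ≤ f t := by
  have : MonotoneOn f (Ici T) := by
    apply monotoneOn_of_deriv_nonneg (convex_Ici T)
    · exact fun x _ => (hf x).continuousAt.continuousWithinAt
    · exact fun x _ => (hf x).differentiableAt.differentiableWithinAt
    · intro x hx
      rw [interior_Ici] at hx
      rw [(hf x).deriv]; exact h0 x (le_of_lt hx)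
  exact this hs (hs.trans hst) hst

theorem aux_mono_Iic {f f' : ℝ → ℝ} (hf : ∀ t, HasDerivAt f (f' t) t) (T : ℝ)
    (h0 : ∀ t, t ≤ T → 0 ≤ f' t) {s t : ℝ} (ht : t ≤ T) (hst : s ≤ t) : f s ≤ f t := by
  have : MonotoneOn f (Iic T) := by
    apply monotoneOn_of_deriv_nonneg (convex_Iic T)
    · exact fun x _ => (hf x).continuousAt.continuousWithinAt
    · exact fun x _ => (hf x).differentiableAt.differentiableWithinAt
    · intro x hx
      rw [interior_Iic] at hx
      rw [(hf x).deriv]; exact h0 x (le_of_lt hx)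
  exact this (hst.trans ht) ht hst

theorem aux_mono {f f' : ℝ → ℝ} (hf : ∀ t, HasDerivAt f (f' t) t)
    (h0 : ∀ t, 0 ≤ f' t) {s t : ℝ} (hst : s ≤ t) : f s ≤ f t :=
  aux_mono_Ici hf s (fun t _ => h0 t) le_rfl hst

theorem aux_not_int {f : ℝ → ℝ} (hf : Integrable f) {c : ℝ} (hc : 0 < c) {S : Set ℝ}
    (hS : MeasurableSet S) (hv : volume S = ⊤) (hb : ∀ t ∈ S, c ≤ f t) : False := by
  have h1 : IntegrableOn (fun _ : ℝ => c) S := by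
    apply Integrable.mono' (hf.integrableOn (s := S)) (by fun_prop)
    refine (ae_restrict_iff' hS).2 (Filter.Eventually.of_forall fun t ht => ?_)
    rw [Real.norm_of_nonneg hc.le]; exact hb t ht
  rw [integrableOn_const_iff] at h1
  simp [hv, hc.ne'] at h1

/-- The energy `w'^2 + ω² w²` controlled in both directions. -/
theorem aux_exp2 (h β : ℝ) (hβ : 0 < β) (t : ℝ) :
    HasDerivAt (fun t => h / (2 * β) * Real.exp (2 * β * t)) (h * Real.exp (2 * β * t)) t := by
  have := (((hasDerivAt_id t).const_mul (2 * β)).exp).const_mul (h / (2 * β))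
  refine HasDerivAt.congr_deriv (this) ?_
  simp; field_simp

theorem aux_B2 (h β κ ω : ℝ) (hh : 0 < h) (hβ : 0 < β) (hω : 0 < ω) (w w1 : ℝ → ℝ)
    (hw : ∀ t, HasDerivAt w (w1 t) t)
    (hw1 : ∀ t, HasDerivAt w1 ((-ω ^ 2 + h * Real.exp (2 * β * t)) * w t) t)
    (hne : ∃ t, w t ≠ 0) (hint : Integrable (fun t => w t ^ 2 * Real.exp (κ * t))) : 0 < κ := by
  by_contra hκ
  push Not at hκ
  obtain ⟨t0, ht0⟩ := hne
  set E : ℝ → ℝ := fun t => w1 t ^ 2 + ω ^ 2 * w t ^ 2 with hE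
  have hE' : ∀ t, HasDerivAt E (2 * (h * Real.exp (2 * β * t)) * (w t * w1 t)) t := by
    intro t
    have := ((hw1 t).pow 2).add (((hw t).pow 2).const_mul (ω ^ 2))
    refine HasDerivAt.congr_deriv (this) ?_
    simp; ring
  have hEb : ∀ t, |w t * w1 t| ≤ E t / (2 * ω) := by
    intro t
    rw [le_div_iff₀ (by positivity)]
    rcases abs_cases (w t * w1 t) with ⟨h1, _⟩ | ⟨h1, _⟩ <;> rw [h1] <;> simp only [hE] <;>
      nlinarith [sq_nonneg (w1 t - ω * w t), sq_nonneg (w1 t + ω * w t)]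
  set A : ℝ → ℝ := fun t => (h / ω) / (2 * β) * Real.exp (2 * β * t) with hA
  have hA' : ∀ t, HasDerivAt A ((h / ω) * Real.exp (2 * β * t)) t := aux_exp2 (h / ω) β hβ
  have hApos : ∀ t, 0 ≤ A t := fun t => by simp only [hA]; positivity
  have hE0 : 0 < E t0 := by
    have : 0 < w t0 ^ 2 := by positivity
    simp only [hE]; positivity
  have key : ∀ t, |2 * (h * Real.exp (2 * β * t)) * (w t * w1 t)| ≤
      (h / ω) * Real.exp (2 * β * t) * E t := by
    intro t
    rw [abs_mul, abs_of_pos (by positivity)]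
    calc _ ≤ 2 * (h * Real.exp (2 * β * t)) * (E t / (2 * ω)) := by gcongr; exact hEb t
      _ = _ := by field_simp
  have hup : ∀ t, t ≤ t0 → E t ≤ E t0 * Real.exp (A t0) := by
    intro t ht
    have h1 := aux_mono (f := fun t => E t * Real.exp (A t))
      (fun t => (hE' t).mul (hA' t).exp) (fun t => by
        have := (abs_le.1 (key t)).1
        have h3 := Real.exp_pos (A t)
        nlinarith) ht
    refine le_trans ?_ h1
    have : E t * 1 ≤ E t * Real.exp (A t) := by
      gcongr
      exact Real.one_le_exp (hApos t)
    simpa using this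
  have hlo : ∀ t, t ≤ t0 → E t0 * Real.exp (-A t0) ≤ E t := by
    intro t ht
    have h1 := aux_mono (f := fun t => -(E t * Real.exp (-A t)))
      (fun t => ((hE' t).mul (hA' t).neg.exp).neg) (fun t => by
        have := (abs_le.1 (key t)).2
        have h3 := Real.exp_pos (-A t)
        simp only [Pi.neg_apply]
        nlinarith) ht
    simp only [neg_le_neg_iff] at h1
    refine le_trans h1 ?_
    have : E t * Real.exp (-A t) ≤ E t * 1 := by
      gcongr
      exact Real.exp_le_one_iff.2 (by linarith [hApos t])
    simpa using this
  set c := E t0 * Real.exp (-A t0) with hc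
  have hcpos : 0 < c := by positivity
  set C := E t0 * Real.exp (A t0) with hC
  have hwc : Continuous w := continuous_iff_continuousAt.2 fun t => (hw t).continuousAt
  have hi2 : IntegrableOn (fun t => w t ^ 2) (Iic t0) := by
    apply Integrable.mono' ((hint.integrableOn (s := Iic t0)).const_mul (Real.exp (-(κ * t0))))
      (by fun_prop)
    refine (ae_restrict_iff' measurableSet_Iic).2 (Filter.Eventually.of_forall fun t ht => ?_)
    rw [Real.norm_of_nonneg (by positivity)]
    have h1 : 1 ≤ Real.exp (-(κ * t0)) * Real.exp (κ * t) := by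
      rw [← Real.exp_add]; apply Real.one_le_exp
      have : t ≤ t0 := ht
      nlinarith
    nlinarith [sq_nonneg (w t)]
  set I := ∫ t in Iic t0, w t ^ 2 with hI
  have hF : ∀ t, HasDerivAt (fun t => ∫ s in t0..t, w s ^ 2) (w t ^ 2) t := fun t =>
    ((hwc.pow 2).integral_hasStrictDerivAt t0 t).hasDerivAt
  have hFb : ∀ t, t ≤ t0 → -I ≤ ∫ s in t0..t, w s ^ 2 := by
    intro t ht
    rw [intervalIntegral.integral_symm, neg_le_neg_iff, intervalIntegral.integral_of_le ht]
    apply setIntegral_mono_set hi2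
    · exact Filter.Eventually.of_forall fun s => by positivity
    · exact (Ioc_subset_Iic_self).eventuallyLE
  have hfin : ∀ t, t ≤ t0 → w t * w1 t - c * t + 2 * ω ^ 2 * (∫ s in t0..t, w s ^ 2) ≤
      w t0 * w1 t0 - c * t0 + 2 * ω ^ 2 * (∫ s in t0..t0, w s ^ 2) := by
    intro t ht
    refine aux_mono_Iic (f := fun t => w t * w1 t - c * t + 2 * ω ^ 2 * (∫ s in t0..t, w s ^ 2))
      (fun t => (((hw t).mul (hw1 t)).sub ((hasDerivAt_id t).const_mul c)).add
        ((hF t).const_mul (2 * ω ^ 2))) t0 ?_ le_rfl ht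
    intro s hs
    have h1 := hlo s hs
    simp only [hE] at h1
    have : 0 ≤ h * Real.exp (2 * β * s) * w s ^ 2 := by positivity
    nlinarith
  set B := w t0 * w1 t0 - c * t0 + 2 * ω ^ 2 * (∫ s in t0..t0, w s ^ 2) with hB
  set D := C / (2 * ω) + 2 * ω ^ 2 * I + B with hD
  have hfin2 : ∀ t, t ≤ t0 → - c * t ≤ D := by
    intro t ht
    have h1 := hfin t ht
    have h2 := mul_le_mul_of_nonneg_left (hFb t ht) (show 0 ≤ 2 * ω ^ 2 by positivity)
    have h3 := (abs_le.1 (hEb t)).1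
    have h4 : E t / (2 * ω) ≤ C / (2 * ω) := by gcongr; exact hup t ht
    simp only [hD]; linarith
  have := hfin2 (min t0 (-(D + 1) / c)) (min_le_left _ _)
  have h5 : c * min t0 (-(D + 1) / c) ≤ c * (-(D + 1) / c) := by gcongr; exact min_le_right _ _
  rw [mul_div_cancel₀ _ hcpos.ne'] at h5
  linarith

theorem aux_B1 (h β κ k : ℝ) (hh : 0 < h) (hβ : 0 < β) (hk : 0 ≤ k) (w w1 : ℝ → ℝ)
    (hw : ∀ t, HasDerivAt w (w1 t) t)
    (hw1 : ∀ t, HasDerivAt w1 ((k ^ 2 + h * Real.exp (2 * β * t)) * w t) t)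
    (hne : ∃ t, w t ≠ 0) (hint : Integrable (fun t => w t ^ 2 * Real.exp (κ * t))) :
    2 * k < κ := by
  obtain ⟨t0, ht0⟩ := hne
  wlog hpos : 0 < w t0 generalizing w w1
  · refine this (fun t => - w t) (fun t => - w1 t) (fun t => (hw t).neg) (fun t => ?_)
      (by simpa using hint) (by simpa using ht0) ?_
    · refine HasDerivAt.congr_deriv ((hw1 t).neg) ?_; ring
    · push Not at hpos
      have := lt_of_le_of_ne hpos ht0
      linarith
  have hN : ∀ t, HasDerivAt (fun t => w t ^ 2) (2 * (w t * w1 t)) t := by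
    intro t
    refine HasDerivAt.congr_deriv ((hw t).pow 2) ?_
    simp; ring
  have hg : ∀ t, HasDerivAt (fun t => 2 * (w t * w1 t))
      (2 * w1 t ^ 2 + 2 * (k ^ 2 + h * Real.exp (2 * β * t)) * w t ^ 2) t := by
    intro t
    refine HasDerivAt.congr_deriv (((hw t).mul (hw1 t)).const_mul 2) ?_
    ring
  -- step 1: w w' ≤ 0
  have hdec : ∀ t, w t * w1 t ≤ 0 := by
    by_contra hcon
    push Not at hcon
    obtain ⟨t1, ht1⟩ := hcon
    have hgm : ∀ t, t1 ≤ t → 2 * (w t1 * w1 t1) ≤ 2 * (w t * w1 t) := fun t ht =>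
      aux_mono (f := fun t => 2 * (w t * w1 t)) hg (fun t => by positivity) ht
    set M := (|κ| + 1) / 2 with hM
    have hMpos : 0 < M := by positivity
    obtain ⟨t2, ht2⟩ : ∃ t2, ∀ t ≥ t2, M ^ 2 ≤ h * Real.exp (2 * β * t) := by
      have : Filter.Tendsto (fun t => h * Real.exp (2 * β * t)) Filter.atTop Filter.atTop := by
        apply Filter.Tendsto.const_mul_atTop hh
        apply Real.tendsto_exp_atTop.comp
        exact Filter.Tendsto.const_mul_atTop (by positivity) Filter.tendsto_id
      exact Filter.eventually_atTop.1 (this.eventually_ge_atTop (M ^ 2))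
    set T := max t1 t2 with hT
    set c0 := 2 * (w T * w1 T) - 2 * M * w T ^ 2 with hc0
    have hd : ∀ t, T ≤ t → c0 ≤ 2 * (w t * w1 t) - 2 * M * w t ^ 2 := by
      intro t ht
      refine aux_mono_Ici (f := fun t => 2 * (w t * w1 t) - 2 * M * w t ^ 2)
        (fun t => (hg t).sub ((hN t).const_mul (2 * M))) T ?_ le_rfl ht
      intro s hs
      have h1 := ht2 s (le_trans (le_max_right _ _) hs)
      have h2 : M ^ 2 * w s ^ 2 ≤ (k ^ 2 + h * Real.exp (2 * β * s)) * w s ^ 2 := by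
        gcongr; nlinarith [sq_nonneg k]
      nlinarith [sq_nonneg (w1 s - M * w s)]
    set g0 := 2 * (w t1 * w1 t1) with hg0
    have hg0p : 0 < g0 := by positivity
    have hNl : ∀ t, T ≤ t → g0 * (t - T) ≤ w t ^ 2 := by
      intro t ht
      have := aux_mono_Ici (f := fun t => w t ^ 2 - g0 * t)
        (fun t => (hN t).sub ((hasDerivAt_id t).const_mul g0)) T
        (fun s hs => by
          have := hgm s (le_trans (le_max_left _ _) hs)
          linarith) le_rfl ht
      nlinarith [sq_nonneg (w T)]
    set T2 := T + (|c0| + 1) / g0 with hT2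
    have hTT : T < T2 := by have : 0 < (|c0| + 1) / g0 := by positivity
                            linarith
    have hNl2 : ∀ t, T2 ≤ t → |c0| + 1 ≤ w t ^ 2 := by
      intro t ht
      refine le_trans ?_ (hNl t (by linarith))
      have : g0 * ((|c0| + 1) / g0) = |c0| + 1 := by field_simp
      rw [← this]
      gcongr
      linarith
    have hmm : ∀ t, T2 ≤ t → w T2 ^ 2 * Real.exp (κ * T2) ≤ w t ^ 2 * Real.exp (κ * t) := by
      intro t ht
      refine aux_mono_Ici (f := fun t => w t ^ 2 * Real.exp (κ * t))
        (fun t => (hN t).mul (((hasDerivAt_id t).const_mul κ).exp)) T2 ?_ le_rfl ht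
      intro s hs
      have h1 := hd s (by linarith)
      have h2 := hNl2 s hs
      have h3 : 0 ≤ 2 * (w s * w1 s) + κ * w s ^ 2 := by
        have : 2 * M = |κ| + 1 := by rw [hM]; ring
        rw [this] at h1
        have h4 : -|κ| * w s ^ 2 ≤ κ * w s ^ 2 := by gcongr; exact neg_abs_le κ
        have := neg_abs_le c0
        nlinarith
      have := mul_nonneg h3 (Real.exp_pos (κ * s)).le
      simp only [id, mul_one]
      nlinarith
    refine aux_not_int hint (c := w T2 ^ 2 * Real.exp (κ * T2)) ?_ (S := Ici T2)
      measurableSet_Ici (by simp) (fun t ht => hmm t ht)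
    have := hNl2 T2 le_rfl
    have h1 : 0 < w T2 ^ 2 := by linarith [abs_nonneg c0]
    positivity
  have hNanti : ∀ s t, s ≤ t → w t ^ 2 ≤ w s ^ 2 := by
    intro s t hst
    have := aux_mono (f := fun t => -(w t ^ 2)) (fun t => (hN t).neg)
      (fun t => by linarith [hdec t]) hst
    linarith
  -- step 2 : no zeros
  have hnz : ∀ t, w t ≠ 0 := by
    intro t1 hz
    set E : ℝ → ℝ := fun t => w1 t ^ 2 + w t ^ 2 with hE
    have hE' : ∀ t, HasDerivAt E
        (2 * (1 + k ^ 2 + h * Real.exp (2 * β * t)) * (w t * w1 t)) t := by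
      intro t
      refine HasDerivAt.congr_deriv (((hw1 t).pow 2).add (hN t)) ?_
      simp; ring
    have hA : ∀ t, HasDerivAt (fun t => (1 + k ^ 2) * t + h / (2 * β) * Real.exp (2 * β * t))
        (1 + k ^ 2 + h * Real.exp (2 * β * t)) t := by
      intro t
      refine HasDerivAt.congr_deriv (((hasDerivAt_id t).const_mul (1 + k ^ 2)).add (aux_exp2 h β hβ t)) ?_
      simp
    have hzz : ∀ t, t1 ≤ t → w t = 0 := by
      intro t ht
      have := hNanti t1 t ht
      rw [hz] at this
      nlinarith [sq_nonneg (w t)]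
    set t2 := max t0 t1 + 1 with ht2
    have ht12 : t1 < t2 := by have := le_max_right t0 t1; linarith
    have ht02 : t0 ≤ t2 := by have := le_max_left t0 t1; linarith
    have hw2 : w t2 = 0 := hzz t2 ht12.le
    have hw12 : w1 t2 = 0 := by
      have h1 : w =ᶠ[nhds t2] fun _ => 0 := by
        filter_upwards [Ioi_mem_nhds ht12] with t ht using hzz t (le_of_lt ht)
      exact (hw t2).unique ((hasDerivAt_const t2 (0 : ℝ)).congr_of_eventuallyEq h1)
    have h1 := aux_mono
      (f := fun t => E t * Real.exp ((1 + k ^ 2) * t + h / (2 * β) * Real.exp (2 * β * t)))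
      (fun t => (hE' t).mul (hA t).exp) (fun t => by
        have h3 := Real.exp_pos ((1 + k ^ 2) * t + h / (2 * β) * Real.exp (2 * β * t))
        set X := Real.exp ((1 + k ^ 2) * t + h / (2 * β) * Real.exp (2 * β * t))
        have h4 : 0 ≤ (1 + k ^ 2 + h * Real.exp (2 * β * t)) * X * (w t + w1 t) ^ 2 := by
          positivity
        simp only [hE]
        nlinarith) ht02
    simp only [hE, hw2, hw12] at h1
    have h5 : 0 < (w1 t0 ^ 2 + w t0 ^ 2) *
      Real.exp ((1 + k ^ 2) * t0 + h / (2 * β) * Real.exp (2 * β * t0)) := by positivity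
    norm_num at h1
    linarith
  have hwc : Continuous w := continuous_iff_continuousAt.2 fun t => (hw t).continuousAt
  have hwpos : ∀ t, 0 < w t := by
    intro t
    by_contra hcon
    push Not at hcon
    obtain ⟨s, hs⟩ := mem_range_of_exists_le_of_exists_ge hwc ⟨t, hcon⟩ ⟨t0, hpos.le⟩
    exact hnz s hs
  have hw1n : ∀ t, w1 t ≤ 0 := by
    intro t
    by_contra hcon
    push Not at hcon
    exact absurd (hdec t) (not_le.2 (mul_pos (hwpos t) hcon))
  have hwanti : ∀ s t, s ≤ t → w t ≤ w s := fun s t hst =>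
    (sq_le_sq₀ (hwpos t).le (hwpos s).le).1 (hNanti s t hst)
  -- step 3
  have hp : ∀ t, w1 t + k * w t ≤ 0 := by
    rcases hk.eq_or_lt with hk0 | hkp
    · intro t; rw [← hk0]; simpa using hw1n t
    intro s
    by_contra hcon
    push Not at hcon
    have hm : ∀ t, s ≤ t → Real.exp (-k * s) * (w1 s + k * w s) ≤
        Real.exp (-k * t) * (w1 t + k * w t) := by
      intro t hst
      refine aux_mono (f := fun t => Real.exp (-k * t) * (w1 t + k * w t))
        (fun t => (((hasDerivAt_id t).const_mul (-k)).exp).mul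
          ((hw1 t).add ((hw t).const_mul k))) ?_ hst
      intro r
      simp only [id, mul_one]
      have : 0 ≤ Real.exp (-k * r) * (h * Real.exp (2 * β * r) * w r) := by
        have := hwpos r
        positivity
      nlinarith
    have hlim : Filter.Tendsto (fun t => Real.exp (-k * t) * (k * w s)) Filter.atTop (nhds 0) := by
      have : Filter.Tendsto (fun t => Real.exp (-k * t)) Filter.atTop (nhds 0) := by
        apply Real.tendsto_exp_atBot.comp
        exact Filter.Tendsto.const_mul_atTop_of_neg (by linarith) Filter.tendsto_id
      simpa using this.mul_const (k * w s)
    have : Real.exp (-k * s) * (w1 s + k * w s) ≤ 0 := by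
      refine ge_of_tendsto hlim ?_
      filter_upwards [Filter.eventually_ge_atTop s] with t ht
      refine (hm t ht).trans ?_
      gcongr
      have := hw1n t
      have := hwanti s t ht
      nlinarith
    have h2 : 0 < Real.exp (-k * s) * (w1 s + k * w s) := by positivity
    linarith
  have hfin : ∀ t, t ≤ 0 → w 0 ≤ Real.exp (k * t) * w t := by
    intro t ht
    have := aux_mono (f := fun t => -(Real.exp (k * t) * w t))
      (fun t => ((((hasDerivAt_id t).const_mul k).exp).mul (hw t)).neg) (fun t => by
        have := mul_nonneg_of_nonpos_of_nonpos (hp t) (neg_nonpos.2 (Real.exp_pos (k * t)).le)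
        simp only [id, mul_one]
        nlinarith) ht
    simp at this
    linarith
  by_contra hcon
  push Not at hcon
  refine aux_not_int hint (c := w 0 ^ 2) (by have := hwpos 0; positivity) (S := Iic 0)
      measurableSet_Iic (by simp) (fun t ht => ?_)
  have ht : t ≤ 0 := ht
  have h1 : w 0 ^ 2 ≤ (Real.exp (k * t) * w t) ^ 2 := by
    have := hwpos 0
    gcongr
    exact hfin t ht
  refine h1.trans ?_
  rw [mul_pow, ← Real.exp_nat_mul, mul_comm]
  refine mul_le_mul_of_nonneg_left (Real.exp_le_exp.2 ?_) (by positivity)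
  push_cast
  nlinarith


theorem aux_int_two {E : Type*} [NormedAddCommGroup E] {f : ℝ → E} (hf : AEStronglyMeasurable f)
    {C D ε η : ℝ} (hε : 0 < ε) (hη : 0 < η) (h1 : ∀ t, 0 ≤ t → ‖f t‖ ≤ C * Real.exp (-ε * t))
    (h2 : ∀ t, t ≤ 0 → ‖f t‖ ≤ D * Real.exp (η * t)) : Integrable f := by
  rw [← integrableOn_univ, ← Iic_union_Ioi (a := (0 : ℝ)), integrableOn_union]
  constructor
  · apply Integrable.mono' ((integrableOn_exp_mul_Iic hη 0).const_mul D) hf.restrict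
    exact (ae_restrict_iff' measurableSet_Iic).2 (Filter.Eventually.of_forall h2)
  · apply Integrable.mono' ((integrableOn_exp_mul_Ioi (neg_lt_zero.2 hε) 0).const_mul C) hf.restrict
    exact (ae_restrict_iff' measurableSet_Ioi).2
      (Filter.Eventually.of_forall fun t ht => h1 t (le_of_lt ht))

theorem aux_exp_le_cosh (s : ℝ) : Real.exp |s| ≤ 2 * Real.cosh s := by
  rw [← Real.cosh_abs, Real.cosh_eq]
  have := Real.exp_pos (-|s|)
  linarith

theorem aux_rpow_le_exp {τ y : ℝ} (hτ : 0 ≤ τ) (hy : 0 < y) :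
    Real.exp (-y) ≤ (Nat.factorial ⌈τ⌉₊ : ℝ) * y ^ (-τ) := by
  have h1 : y ^ τ ≤ (Nat.factorial ⌈τ⌉₊ : ℝ) * Real.exp y := by
    have hf : (1 : ℝ) ≤ (Nat.factorial ⌈τ⌉₊ : ℝ) := by
      exact_mod_cast Nat.one_le_iff_ne_zero.2 (Nat.factorial_ne_zero _)
    rcases le_total y 1 with h | h
    · have := Real.rpow_le_one hy.le h hτ
      have := Real.one_le_exp hy.le
      nlinarith
    · have h2 : y ^ τ ≤ y ^ (⌈τ⌉₊ : ℝ) := Real.rpow_le_rpow_of_exponent_le h (Nat.le_ceil τ)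
      rw [Real.rpow_natCast] at h2
      have h3 := Real.pow_div_factorial_le_exp y hy.le ⌈τ⌉₊
      rw [div_le_iff₀ (by positivity)] at h3
      linarith
  rw [Real.rpow_neg hy.le, Real.exp_neg, ← div_eq_mul_inv, le_div_iff₀ (by positivity),
    inv_mul_le_iff₀ (by positivity)]
  linarith

theorem aux_intR (n : ℕ) (σ z : ℝ) (hz : 0 < z) :
    Integrable (fun s : ℝ => Real.cosh s ^ n * Real.exp (-z * Real.cosh s) * Real.exp (σ * s)) := by
  set τ : ℝ := n + |σ| + 1 with hτ
  have hτ0 : 0 ≤ τ := by positivity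
  set F : ℝ := (Nat.factorial ⌈τ⌉₊ : ℝ) with hF
  have key : ∀ s, ‖Real.cosh s ^ n * Real.exp (-z * Real.cosh s) * Real.exp (σ * s)‖ ≤
      (F * z ^ (-τ) * 2 ^ τ) * Real.exp (-1 * |s|) := by
    intro s
    rw [Real.norm_of_nonneg (by have := Real.cosh_pos s; positivity)]
    have hc := Real.cosh_pos s
    have h1 := aux_rpow_le_exp hτ0 (mul_pos hz hc)
    rw [Real.mul_rpow hz.le hc.le] at h1
    have h2 : Real.cosh s ^ (-τ) ≤ 2 ^ τ * Real.exp (-τ * |s|) := by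
      have h3 : (2 * Real.cosh s) ^ (-τ) ≤ (Real.exp |s|) ^ (-τ) :=
        Real.rpow_le_rpow_of_nonpos (Real.exp_pos _) (aux_exp_le_cosh s) (by linarith)
      rw [Real.mul_rpow (by norm_num) hc.le, ← Real.exp_mul, Real.rpow_neg (by norm_num),
        inv_mul_le_iff₀ (by positivity)] at h3
      rwa [mul_comm |s| (-τ)] at h3
    have h4 : Real.cosh s ^ n ≤ Real.exp (n * |s|) := by
      rw [Real.exp_nat_mul]
      gcongr
      rw [← Real.cosh_abs, Real.cosh_eq]
      have : Real.exp (-|s|) ≤ Real.exp |s| := Real.exp_le_exp.2 (by linarith [abs_nonneg s])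
      linarith
    have h5 : Real.exp (σ * s) ≤ Real.exp (|σ| * |s|) := by
      rw [← abs_mul]; exact Real.exp_le_exp.2 (le_abs_self _)
    calc _ ≤ Real.exp (n * |s|) * (F * (z ^ (-τ) * (2 ^ τ * Real.exp (-τ * |s|)))) *
          Real.exp (|σ| * |s|) := by
          gcongr
          rw [neg_mul]
          refine h1.trans ?_
          gcongr
      _ = (F * z ^ (-τ) * 2 ^ τ) * (Real.exp (n * |s|) * Real.exp (-τ * |s|) *
          Real.exp (|σ| * |s|)) := by ring
      _ = _ := by
          rw [← Real.exp_add, ← Real.exp_add]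
          congr 2
          rw [hτ]; ring
  have hcont : Continuous
      (fun s : ℝ => Real.cosh s ^ n * Real.exp (-z * Real.cosh s) * Real.exp (σ * s)) := by
    have := Real.continuous_cosh
    fun_prop
  refine aux_int_two hcont.aestronglyMeasurable (ε := 1) (η := 1)
    (C := F * z ^ (-τ) * 2 ^ τ) (D := F * z ^ (-τ) * 2 ^ τ) one_pos one_pos ?_ ?_
  · intro t ht
    have := key t
    rwa [abs_of_nonneg ht] at this
  · intro t ht
    have := key t
    rw [abs_of_nonpos ht] at this
    simpa using this

/-- integrand -/
def auxg (ν : ℂ) (n : ℕ) (z s : ℝ) : ℂ :=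
  ((Real.cosh s ^ n * Real.exp (-z * Real.cosh s) : ℝ) : ℂ) * Complex.exp (ν * s)

def auxJ (ν : ℂ) (n : ℕ) (z : ℝ) : ℂ := ∫ s : ℝ, auxg ν n z s

theorem auxg_norm (ν : ℂ) (n : ℕ) (z s : ℝ) :
    ‖auxg ν n z s‖ = Real.cosh s ^ n * Real.exp (-z * Real.cosh s) * Real.exp (ν.re * s) := by
  have := Real.cosh_pos s
  rw [auxg, norm_mul, Complex.norm_exp, Complex.norm_real, Real.norm_of_nonneg (by positivity)]
  simp

theorem auxg_cont (ν : ℂ) (n : ℕ) (z : ℝ) : Continuous (auxg ν n z) := by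
  have := Real.continuous_cosh
  unfold auxg
  fun_prop

theorem auxg_int (ν : ℂ) (n : ℕ) (z : ℝ) (hz : 0 < z) : Integrable (auxg ν n z) := by
  apply Integrable.mono' (aux_intR n ν.re z hz) (auxg_cont ν n z).aestronglyMeasurable
  exact Filter.Eventually.of_forall fun s => (auxg_norm ν n z s).le

theorem auxJ_deriv (ν : ℂ) (n : ℕ) (z : ℝ) (hz : 0 < z) :
    HasDerivAt (auxJ ν n) (-auxJ ν (n + 1) z) z := by
  have := (hasDerivAt_integral_of_dominated_loc_of_deriv_le (μ := volume) (F := auxg ν n)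
    (F' := fun z s => - auxg ν (n + 1) z s) (x₀ := z) (s := Ioi (z / 2))
    (bound := fun s => Real.cosh s ^ (n + 1) * Real.exp (-(z / 2) * Real.cosh s) *
      Real.exp (ν.re * s)) (Ioi_mem_nhds (by linarith))
    (Filter.Eventually.of_forall fun x => (auxg_cont ν n x).aestronglyMeasurable)
    (auxg_int ν n z hz) (auxg_cont ν (n + 1) z).neg.aestronglyMeasurable
    (Filter.Eventually.of_forall fun s x hx => ?_)
    (aux_intR (n + 1) ν.re (z / 2) (by linarith))
    (Filter.Eventually.of_forall fun s x hx => ?_)).2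
  · rw [integral_neg] at this
    exact this
  · rw [norm_neg, auxg_norm]
    have hc := Real.cosh_pos s
    have : z / 2 ≤ x := le_of_lt hx
    gcongr
  · unfold auxg
    have h1 : HasDerivAt (fun x : ℝ => Real.cosh s ^ n * Real.exp (-x * Real.cosh s))
        (Real.cosh s ^ n * (Real.exp (-x * Real.cosh s) * (-1 * Real.cosh s))) x :=
      ((((hasDerivAt_id x).neg.mul_const (Real.cosh s))).exp).const_mul _
    refine (h1.ofReal_comp.mul_const (Complex.exp (ν * s))).congr_deriv ?_
    push_cast
    ring

theorem auxJ_ode (ν : ℂ) (z : ℝ) (hz : 0 < z) :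
    (z : ℂ) ^ 2 * auxJ ν 2 z - z * auxJ ν 1 z = (z ^ 2 + ν ^ 2) * auxJ ν 0 z := by
  have hsi : Integrable (fun s => (Real.sinh s : ℂ) * auxg ν 0 z s) := by
    have hc : Continuous (fun s => (Real.sinh s : ℂ) * auxg ν 0 z s) := by
      have := Real.continuous_sinh
      have := auxg_cont ν 0 z
      fun_prop
    apply Integrable.mono' (aux_intR 1 ν.re z hz) hc.aestronglyMeasurable
    refine Filter.Eventually.of_forall fun s => ?_
    rw [norm_mul, auxg_norm, Complex.norm_real, pow_zero, one_mul, pow_one, Real.norm_eq_abs, mul_assoc]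
    refine mul_le_mul_of_nonneg_right ?_ (by positivity)
    have h1 := Real.cosh_sq s
    exact abs_le_of_sq_le_sq (by linarith) (Real.cosh_pos s).le
  have i0 := auxg_int ν 0 z hz
  have i1 := auxg_int ν 1 z hz
  have i2 := auxg_int ν 2 z hz
  have hd : ∀ s : ℝ, HasDerivAt (fun s : ℝ => -(z : ℂ) * ((Real.sinh s : ℂ) * auxg ν 0 z s) - ν * auxg ν 0 z s)
      ((z : ℂ) ^ 2 * auxg ν 2 z s - z * auxg ν 1 z s - (z ^ 2 + ν ^ 2) * auxg ν 0 z s) s := by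
    intro s
    have e1 : HasDerivAt (fun s : ℝ => ((Real.cosh s ^ 0 * Real.exp (-z * Real.cosh s) : ℝ) : ℂ))
        (((Real.exp (-z * Real.cosh s) * (-z * Real.sinh s) : ℝ)) : ℂ) s := by
      have := (((Real.hasDerivAt_cosh s).const_mul (-z)).exp).ofReal_comp
      simpa using this
    have e2 : HasDerivAt (fun s : ℝ => Complex.exp (ν * s)) (Complex.exp (ν * s) * ν) s := by
      have := ((Complex.ofRealCLM.hasDerivAt (x := s)).const_mul ν).cexp
      simpa using this
    have e3 : HasDerivAt (auxg ν 0 z) _ s := e1.mul e2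
    have e4 := (Real.hasDerivAt_sinh s).ofReal_comp
    refine (((e4.mul e3).const_mul (-(z : ℂ))).sub (e3.const_mul ν)).congr_deriv ?_
    have h1 : (Real.sinh s : ℂ) ^ 2 = (Real.cosh s : ℂ) ^ 2 - 1 := by
      have := Real.sinh_sq s
      exact_mod_cast this
    unfold auxg
    push_cast
    push_cast at h1
    linear_combination (z : ℂ) ^ 2 * Complex.exp (-z * Complex.cosh s) * Complex.exp (ν * s) * h1
  have j1 : Integrable (fun s => (z : ℂ) ^ 2 * auxg ν 2 z s - z * auxg ν 1 z s) :=
    (i2.const_mul _).sub (i1.const_mul _)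
  have h0 := integral_eq_zero_of_hasDerivAt_of_integrable hd
    (j1.sub (i0.const_mul _))
    ((hsi.const_mul _).sub (i0.const_mul _))
  rw [integral_sub j1 (i0.const_mul _),
    integral_sub (i2.const_mul _) (i1.const_mul _), integral_const_mul, integral_const_mul,
    integral_const_mul] at h0
  exact sub_eq_zero.1 h0

theorem auxJ_bound (ν : ℂ) (hν : 0 ≤ ν.re) (τ : ℝ) (hτ : ν.re < τ) :
    ∃ C : ℝ, 0 ≤ C ∧ ∀ z : ℝ, 0 < z → ‖auxJ ν 0 z‖ ≤ C * z ^ (-τ) := by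
  have hτ0 : 0 ≤ τ := by linarith
  set F : ℝ := (Nat.factorial ⌈τ⌉₊ : ℝ) with hF
  set G : ℝ → ℝ := fun s => Real.exp (-τ * |s|) * Real.exp (ν.re * s) with hG
  have hGi : Integrable G := by
    have hc : Continuous G := by fun_prop
    refine aux_int_two hc.aestronglyMeasurable (ε := τ - ν.re) (η := τ + ν.re)
      (C := 1) (D := 1) (by linarith) (by linarith) ?_ ?_
    · intro t ht
      rw [Real.norm_of_nonneg (by positivity)]
      simp only [hG]
      rw [abs_of_nonneg ht, ← Real.exp_add, one_mul]
      apply le_of_eq; congr 1; ring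
    · intro t ht
      rw [Real.norm_of_nonneg (by positivity)]
      simp only [hG]
      rw [abs_of_nonpos ht, ← Real.exp_add, one_mul]
      apply le_of_eq; congr 1; ring
  refine ⟨F * 2 ^ τ * ∫ s, G s, ?_, ?_⟩
  · have : 0 ≤ ∫ s, G s := integral_nonneg fun s => by simp only [hG]; positivity
    positivity
  intro z hz
  have hb : ∀ s, ‖auxg ν 0 z s‖ ≤ (F * 2 ^ τ * z ^ (-τ)) * G s := by
    intro s
    rw [auxg_norm, pow_zero, one_mul, neg_mul]
    have hc := Real.cosh_pos s
    have h1 := aux_rpow_le_exp hτ0 (mul_pos hz hc)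
    rw [Real.mul_rpow hz.le hc.le] at h1
    have h2 : Real.cosh s ^ (-τ) ≤ 2 ^ τ * Real.exp (-τ * |s|) := by
      have h3 : (2 * Real.cosh s) ^ (-τ) ≤ (Real.exp |s|) ^ (-τ) :=
        Real.rpow_le_rpow_of_nonpos (Real.exp_pos _) (aux_exp_le_cosh s) (by linarith)
      rw [Real.mul_rpow (by norm_num) hc.le, ← Real.exp_mul, Real.rpow_neg (by norm_num),
        inv_mul_le_iff₀ (by positivity)] at h3
      rwa [mul_comm |s| (-τ)] at h3
    calc _ ≤ (F * (z ^ (-τ) * (2 ^ τ * Real.exp (-τ * |s|)))) * Real.exp (ν.re * s) := by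
          gcongr
          refine h1.trans ?_
          gcongr
      _ = _ := by simp only [hG]; ring
  have := norm_integral_le_of_norm_le (hGi.const_mul (F * 2 ^ τ * z ^ (-τ)))
    (Filter.Eventually.of_forall hb)
  rw [integral_const_mul] at this
  refine this.trans (le_of_eq ?_)
  ring

theorem aux_pos {f : ℝ → ℝ} (hf : Integrable f) (h : ∀ s, 0 < f s) : 0 < ∫ s, f s := by
  rw [integral_pos_iff_support_of_nonneg (fun s => (h s).le) hf]
  have : Function.support f = univ := by
    ext s; simp [(h s).ne']
  rw [this]; simp

theorem aux_cosh_ge (s : ℝ) : 1 + s ^ 2 / 2 ≤ Real.cosh s := by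
  have h1 : Real.cosh s = 1 + 2 * Real.sinh (s / 2) ^ 2 := by
    have := Real.cosh_two_mul (s / 2)
    rw [show 2 * (s / 2) = s by ring] at this
    rw [this, Real.cosh_sq]; ring
  have h2 : (s / 2) ^ 2 ≤ Real.sinh (s / 2) ^ 2 := by
    rcases le_total 0 (s / 2) with h | h
    · have := Real.self_le_sinh_iff.2 h
      gcongr
    · have := Real.sinh_le_self_iff.2 h
      nlinarith
  rw [h1]; linarith

theorem auxJ_re (ν : ℂ) (z : ℝ) (hz : 0 < z) :
    (auxJ ν 0 z).re = ∫ s, (auxg ν 0 z s).re := by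
  have := Complex.reCLM.integral_comp_comm (auxg_int ν 0 z hz)
  simpa [auxJ] using this.symm

theorem auxJ_ne (ν : ℂ) (hν : ν.re = 0 ∨ ν.im = 0) : ∃ z : ℝ, 0 < z ∧ auxJ ν 0 z ≠ 0 := by
  rcases hν with hν | hν
  · set ω := ν.im with hω
    set z := ω ^ 2 + 1 / 2 with hz
    have hzp : 0 < z := by positivity
    refine ⟨z, hzp, fun h0 => ?_⟩
    have h1 := auxJ_re ν z hzp
    rw [h0, Complex.zero_re] at h1
    have i0 := aux_intR 0 0 z hzp
    have i1 := aux_intR 1 0 z hzp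
    have i2 := aux_intR 2 0 z hzp
    simp only [pow_zero, one_mul, zero_mul, Real.exp_zero, mul_one] at i0 i1 i2
    have hd : ∀ s : ℝ, HasDerivAt (fun s => -(Real.sinh s * Real.exp (-z * Real.cosh s)))
        (z * (Real.cosh s ^ 2 * Real.exp (-z * Real.cosh s)) -
          (Real.cosh s ^ 1 * Real.exp (-z * Real.cosh s)) - z * Real.exp (-z * Real.cosh s)) s := by
      intro s
      refine ((Real.hasDerivAt_sinh s).mul ((Real.hasDerivAt_cosh s).const_mul (-z)).exp).neg.congr_deriv ?_
      have := Real.sinh_sq s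
      linear_combination z * Real.exp (-z * Real.cosh s) * this
    have hsi : Integrable (fun s => -(Real.sinh s * Real.exp (-z * Real.cosh s))) := by
      have hc : Continuous (fun s => -(Real.sinh s * Real.exp (-z * Real.cosh s))) := by
        have := Real.continuous_sinh
        have := Real.continuous_cosh
        fun_prop
      apply Integrable.mono' i1 hc.aestronglyMeasurable
      refine Filter.Eventually.of_forall fun s => ?_
      rw [norm_neg, norm_mul, Real.norm_eq_abs, Real.norm_of_nonneg (Real.exp_pos _).le, pow_one]
      gcongr
      have h1 := Real.cosh_sq s
      exact abs_le_of_sq_le_sq (by linarith) (Real.cosh_pos s).le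
    have iX : Integrable (fun s => z * (Real.cosh s ^ 2 * Real.exp (-z * Real.cosh s)) -
          (Real.cosh s ^ 1 * Real.exp (-z * Real.cosh s)) - z * Real.exp (-z * Real.cosh s)) :=
      ((i2.const_mul z).sub i1).sub (i0.const_mul z)
    have hX := integral_eq_zero_of_hasDerivAt_of_integrable hd iX hsi
    have hpos := aux_pos i0 (fun s => Real.exp_pos _)
    have hle : ∫ s, ((1 / 2) * Real.exp (-z * Real.cosh s) - (1 / 2) *
        (z * (Real.cosh s ^ 2 * Real.exp (-z * Real.cosh s)) -
          (Real.cosh s ^ 1 * Real.exp (-z * Real.cosh s)) - z * Real.exp (-z * Real.cosh s)))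
        ≤ ∫ s, (auxg ν 0 z s).re := by
      apply integral_mono ((i0.const_mul _).sub (iX.const_mul _)) (auxg_int ν 0 z hzp).re
      intro s
      have e : (auxg ν 0 z s).re = Real.exp (-z * Real.cosh s) * Real.cos (ω * s) := by
        rw [auxg, Complex.re_ofReal_mul, Complex.exp_re]
        simp [hν, ← hω]
      simp only [RCLike.re_to_complex, Pi.sub_apply, e]
      have hc := Real.one_sub_sq_div_two_le_cos (x := ω * s)
      have hy := aux_cosh_ge s
      have hE := Real.exp_pos (-z * Real.cosh s)
      have : (1 / 2) - (1 / 2) * (z * Real.cosh s ^ 2 - Real.cosh s - z) ≤ Real.cos (ω * s) := by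
        have h5 : ω ^ 2 * (s ^ 2 / 2) ≤ ω ^ 2 * (Real.cosh s - 1) := by gcongr; linarith
        have h6 : 0 ≤ z * (Real.cosh s - 1) ^ 2 := by positivity
        rw [hz] at h6 ⊢
        nlinarith
      nlinarith
    rw [integral_sub (i0.const_mul _) (iX.const_mul _), integral_const_mul, integral_const_mul] at hle
    have hX' : (∫ s, (z * (Real.cosh s ^ 2 * Real.exp (-z * Real.cosh s)) -
          (Real.cosh s ^ 1 * Real.exp (-z * Real.cosh s)) - z * Real.exp (-z * Real.cosh s))) = 0 := hX
    rw [hX'] at hle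
    linarith
  · refine ⟨1, one_pos, fun h0 => ?_⟩
    have h1 := auxJ_re ν 1 one_pos
    rw [h0, Complex.zero_re] at h1
    have := aux_pos (f := fun s => (auxg ν 0 1 s).re) (auxg_int ν 0 1 one_pos).re (fun s => by
      rw [auxg, Complex.re_ofReal_mul, Complex.exp_re]
      simp [hν]
      positivity)
    linarith

theorem aux_exp_image : Real.exp '' univ = Ioi 0 := by rw [image_univ, Real.range_exp]

theorem aux_change (g : ℝ → ℝ) :
    IntegrableOn g (Ioi 0) ↔ Integrable (fun t => Real.exp t * g (Real.exp t)) := by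
  rw [← aux_exp_image, integrableOn_image_iff_integrableOn_abs_deriv_smul MeasurableSet.univ
    (fun x _ => (Real.hasDerivAt_exp x).hasDerivWithinAt) Real.exp_injective.injOn,
    integrableOn_univ]
  simp [abs_of_pos, Real.exp_pos]

/-- from a solution `u` on the half line to a solution on the line -/
theorem aux_forward (a b δ h β : ℝ) (u : ℝ → ℂ) (L : ℂ →L[ℝ] ℝ) (hL : ∀ z, |L z| ≤ ‖z‖)
    (hne : ∃ x ∈ Ioi (0 : ℝ), L (u x) ≠ 0)
    (hu : ContDiffOn ℝ 2 u (Ioi 0))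
    (hode : ∀ x ∈ Ioi (0 : ℝ),
        ((x ^ 2 : ℝ) : ℂ) * deriv (deriv u) x + ((a * x : ℝ) : ℂ) * deriv u x
          + ((b - h * x ^ (2 * β) : ℝ) : ℂ) * u x = 0)
    (hint : IntegrableOn (fun x : ℝ => ‖u x‖ ^ 2 * x ^ (-(2 * δ))) (Ioi 0)) :
    ∃ w w1 : ℝ → ℝ, (∀ t, HasDerivAt w (w1 t) t) ∧
      (∀ t, HasDerivAt w1 ((((a - 1) ^ 2 - 4 * b) / 4 + h * Real.exp (2 * β * t)) * w t) t) ∧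
      (∃ t, w t ≠ 0) ∧ Integrable (fun t => w t ^ 2 * Real.exp ((2 - a - 2 * δ) * t)) := by
  set γ := (1 - a) / 2 with hγ
  have hLm : ∀ (r : ℝ) (z : ℂ), L ((r : ℂ) * z) = r * L z := by
    intro r z
    rw [← Complex.real_smul, map_smul, smul_eq_mul]
  have hu' := (contDiffOn_succ_iff_deriv_of_isOpen (n := 1) isOpen_Ioi).1 hu
  have hd1 : ∀ x ∈ Ioi (0 : ℝ), HasDerivAt (fun x => L (u x)) (L (deriv u x)) x := by
    intro x hx
    have h1 := ((hu'.1 x hx).differentiableAt (Ioi_mem_nhds hx)).hasDerivAt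
    exact L.hasFDerivAt.comp_hasDerivAt x h1
  have hd2 : ∀ x ∈ Ioi (0 : ℝ), HasDerivAt (fun x => L (deriv u x)) (L (deriv (deriv u) x)) x := by
    intro x hx
    have h1 := ((hu'.2.2.differentiableOn one_ne_zero x hx).differentiableAt
      (Ioi_mem_nhds hx)).hasDerivAt
    exact L.hasFDerivAt.comp_hasDerivAt x h1
  have hode2 : ∀ x ∈ Ioi (0 : ℝ), x ^ 2 * L (deriv (deriv u) x) + a * x * L (deriv u x)
      + (b - h * x ^ (2 * β)) * L (u x) = 0 := by
    intro x hx
    have := congrArg L (hode x hx)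
    rwa [map_add, map_add, hLm, hLm, hLm, map_zero] at this
  have he : ∀ t : ℝ, HasDerivAt (fun t => Real.exp (-γ * t)) (Real.exp (-γ * t) * -γ) t := by
    intro t
    simpa using ((hasDerivAt_id t).const_mul (-γ)).exp
  have hv : ∀ t : ℝ, HasDerivAt (fun t => L (u (Real.exp t)))
      (L (deriv u (Real.exp t)) * Real.exp t) t := fun t =>
    (hd1 (Real.exp t) (Real.exp_pos t)).comp t (Real.hasDerivAt_exp t)
  have hv1 : ∀ t : ℝ, HasDerivAt (fun t => L (deriv u (Real.exp t)))
      (L (deriv (deriv u) (Real.exp t)) * Real.exp t) t := fun t =>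
    (hd2 (Real.exp t) (Real.exp_pos t)).comp t (Real.hasDerivAt_exp t)
  have hw : ∀ t, HasDerivAt (fun t => Real.exp (-γ * t) * L (u (Real.exp t)))
      (Real.exp (-γ * t) * (L (deriv u (Real.exp t)) * Real.exp t - γ * L (u (Real.exp t)))) t := by
    intro t
    refine ((he t).mul (hv t)).congr_deriv ?_
    ring
  refine ⟨fun t => Real.exp (-γ * t) * L (u (Real.exp t)),
    fun t => Real.exp (-γ * t) * (L (deriv u (Real.exp t)) * Real.exp t
      - γ * L (u (Real.exp t))), hw, ?_, ?_, ?_⟩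
  · intro t
    refine ((he t).mul (((hv1 t).mul (Real.hasDerivAt_exp t)).sub
      ((hv t).const_mul γ))).congr_deriv ?_
    have h1 := hode2 (Real.exp t) (Real.exp_pos t)
    rw [← Real.exp_mul, show t * (2 * β) = 2 * β * t by ring] at h1
    simp only [Pi.sub_apply, Pi.mul_apply]
    have ha : a = 1 - 2 * γ := by rw [hγ]; ring
    rw [ha] at h1 ⊢
    linear_combination Real.exp (-γ * t) * h1
  · obtain ⟨x, hx, hx0⟩ := hne
    refine ⟨Real.log x, ?_⟩
    simp only [Real.exp_log hx]
    exact mul_ne_zero (Real.exp_pos _).ne' hx0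
  · rw [aux_change] at hint
    have hc : Continuous (fun t => Real.exp (-γ * t) * L (u (Real.exp t))) :=
      continuous_iff_continuousAt.2 fun t => (hw t).continuousAt
    refine Integrable.mono' hint (by fun_prop) (Filter.Eventually.of_forall fun t => ?_)
    rw [Real.norm_of_nonneg (by positivity), ← Real.exp_mul]
    have h1 : L (u (Real.exp t)) ^ 2 ≤ ‖u (Real.exp t)‖ ^ 2 := by
      rw [← sq_abs]; gcongr; exact hL _
    have h2 : Real.exp (-γ * t) ^ 2 * Real.exp ((2 - a - 2 * δ) * t) =
        Real.exp t * Real.exp (t * -(2 * δ)) := by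
      rw [← Real.exp_nat_mul, ← Real.exp_add, ← Real.exp_add]
      congr 1
      rw [hγ]; push_cast; ring
    calc _ = (Real.exp (-γ * t) ^ 2 * Real.exp ((2 - a - 2 * δ) * t)) * L (u (Real.exp t)) ^ 2 := by
          ring
      _ ≤ (Real.exp (-γ * t) ^ 2 * Real.exp ((2 - a - 2 * δ) * t)) * ‖u (Real.exp t)‖ ^ 2 := by
          gcongr
      _ = _ := by rw [h2]; ring

theorem aux_sqrt (m : ℝ) : ∃ S : ℂ, (m : ℂ) ^ (1 / 2 : ℂ) = S ∧ S ^ 2 = m ∧ 0 ≤ S.re ∧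
    ((0 ≤ m ∧ S.im = 0 ∧ S.re ^ 2 = m) ∨ (m < 0 ∧ S.re = 0)) := by
  refine ⟨_, rfl, ?_, ?_⟩
  · have := Complex.cpow_ofNat_inv_pow (m : ℂ) 2
    rwa [one_div]
  have hsq : ((m : ℂ) ^ (1 / 2 : ℂ)) ^ 2 = m := by
    have := Complex.cpow_ofNat_inv_pow (m : ℂ) 2
    rwa [one_div]
  rcases le_or_gt 0 m with hm | hm
  · have h1 : (m : ℂ) ^ (1 / 2 : ℂ) = ((m ^ (1 / 2 : ℝ) : ℝ) : ℂ) := by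
      rw [Complex.ofReal_cpow hm]; norm_num
    rw [h1] at hsq ⊢
    refine ⟨by rw [Complex.ofReal_re]; positivity, Or.inl ⟨hm, by simp, ?_⟩⟩
    rw [Complex.ofReal_re]; exact_mod_cast hsq
  · set S := (m : ℂ) ^ (1 / 2 : ℂ)
    have h1 := congrArg Complex.re hsq
    have h2 := congrArg Complex.im hsq
    simp [sq] at h1 h2
    have h3 : S.re = 0 := by
      by_contra h
      have h4 : S.im = 0 := by
        have : S.re * S.im = 0 := by linarith
        simpa [h] using this
      rw [h4] at h1
      nlinarith [mul_self_nonneg S.re]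
    exact ⟨h3.ge, Or.inr ⟨hm, h3⟩⟩

/-- from a solution on the line to a solution on the half line -/
theorem aux_backward (a b δ h β : ℝ) (w w1 : ℝ → ℂ) (hw : ∀ t, HasDerivAt w (w1 t) t)
    (hw1 : ∀ t, HasDerivAt w1 (((((a - 1) ^ 2 - 4 * b) / 4 + h * Real.exp (2 * β * t) : ℝ) : ℂ)
      * w t) t) (hne : ∃ t, w t ≠ 0)
    (hint : Integrable (fun t => ‖w t‖ ^ 2 * Real.exp ((2 - a - 2 * δ) * t))) :
    ∃ u : ℝ → ℂ,
      (∃ x ∈ Ioi (0 : ℝ), u x ≠ 0) ∧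
      ContDiffOn ℝ 2 u (Ioi 0) ∧
      (∀ x ∈ Ioi (0 : ℝ),
        ((x ^ 2 : ℝ) : ℂ) * deriv (deriv u) x + ((a * x : ℝ) : ℂ) * deriv u x
          + ((b - h * x ^ (2 * β) : ℝ) : ℂ) * u x = 0) ∧
      IntegrableOn (fun x : ℝ => ‖u x‖ ^ 2 * x ^ (-(2 * δ))) (Ioi 0) := by
  set γ := (1 - a) / 2 with hγ
  set Q : ℝ → ℝ := fun x => ((a - 1) ^ 2 - 4 * b) / 4 + h * x ^ (2 * β) with hQ
  set u : ℝ → ℂ := fun x => ((x ^ γ : ℝ) : ℂ) * w (Real.log x) with hu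
  set u1 : ℝ → ℂ := fun x => ((x ^ (γ - 1) : ℝ) : ℂ) * (γ * w (Real.log x) + w1 (Real.log x))
    with hu1
  set u2 : ℝ → ℂ := fun x => ((x ^ (γ - 1 - 1) : ℝ) : ℂ) *
    ((γ - 1) * (γ * w (Real.log x) + w1 (Real.log x)) + γ * w1 (Real.log x)
      + (Q x : ℂ) * w (Real.log x)) with hu2
  have hp : ∀ (c : ℝ) (x : ℝ), 0 < x → HasDerivAt (fun x : ℝ => ((x ^ c : ℝ) : ℂ))
      ((c * x ^ (c - 1) : ℝ) : ℂ) x := fun c x hx =>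
    (Real.hasDerivAt_rpow_const (Or.inl hx.ne')).ofReal_comp
  have hl : ∀ x : ℝ, 0 < x → HasDerivAt (fun x => w (Real.log x))
      ((x⁻¹ : ℝ) • w1 (Real.log x)) x := fun x hx =>
    (hw (Real.log x)).scomp x (Real.hasDerivAt_log hx.ne')
  have hl1 : ∀ x : ℝ, 0 < x → HasDerivAt (fun x => w1 (Real.log x))
      ((x⁻¹ : ℝ) • ((Q x : ℂ) * w (Real.log x))) x := by
    intro x hx
    have := (hw1 (Real.log x)).scomp x (Real.hasDerivAt_log hx.ne')
    have e : Real.exp (2 * β * Real.log x) = x ^ (2 * β) := by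
      rw [Real.rpow_def_of_pos hx]; congr 1; ring
    rw [e] at this
    exact this
  have hxp : ∀ (c x : ℝ), 0 < x → x ^ c = x * x ^ (c - 1) := by
    intro c x hx
    rw [Real.rpow_sub_one hx.ne']; field_simp
  have hd1 : ∀ x : ℝ, 0 < x → HasDerivAt u (u1 x) x := by
    intro x hx
    refine ((hp γ x hx).mul (hl x hx)).congr_deriv ?_
    have hx' : (x : ℂ) ≠ 0 := by exact_mod_cast hx.ne'
    simp only [hu1, Complex.real_smul]
    rw [hxp γ x hx]
    push_cast
    field_simp
  have hd2 : ∀ x : ℝ, 0 < x → HasDerivAt u1 (u2 x) x := by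
    intro x hx
    refine ((hp (γ - 1) x hx).mul (((hl x hx).const_mul (γ : ℂ)).add (hl1 x hx))).congr_deriv ?_
    have hx' : (x : ℂ) ≠ 0 := by exact_mod_cast hx.ne'
    simp only [hu2, Complex.real_smul, Pi.add_apply]
    rw [hxp (γ - 1) x hx]
    push_cast
    field_simp
    ring
  have hdu : ∀ x : ℝ, 0 < x → deriv u x = u1 x := fun x hx => (hd1 x hx).deriv
  have hdu1 : ∀ x : ℝ, 0 < x → deriv u =ᶠ[nhds x] u1 := fun x hx => by
    filter_upwards [Ioi_mem_nhds hx] with y hy using hdu y hy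
  have hddu : ∀ x : ℝ, 0 < x → deriv (deriv u) x = u2 x := fun x hx => by
    rw [(hdu1 x hx).deriv_eq, (hd2 x hx).deriv]
  have hwc : Continuous w := continuous_iff_continuousAt.2 fun t => (hw t).continuousAt
  have hw1c : Continuous w1 := continuous_iff_continuousAt.2 fun t => (hw1 t).continuousAt
  refine ⟨u, ?_, ?_, ?_, ?_⟩
  · obtain ⟨t, ht⟩ := hne
    refine ⟨Real.exp t, Real.exp_pos t, ?_⟩
    simp only [hu, Real.log_exp]
    refine mul_ne_zero ?_ ht
    exact_mod_cast (Real.rpow_pos_of_pos (Real.exp_pos t) γ).ne'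
  · refine (contDiffOn_succ_iff_deriv_of_isOpen (n := 1) isOpen_Ioi).2 ⟨fun x hx =>
      (hd1 x hx).differentiableAt.differentiableWithinAt, by simp, ?_⟩
    refine (contDiffOn_succ_iff_deriv_of_isOpen (n := 0) isOpen_Ioi).2 ⟨fun x hx =>
      ((hd2 x hx).congr_of_eventuallyEq (hdu1 x hx)).differentiableAt.differentiableWithinAt,
      by simp, ?_⟩
    rw [contDiffOn_zero]
    have hcu2 : ContinuousOn u2 (Ioi 0) := by
      intro x hx
      have hx0 : x ≠ 0 := ne_of_gt hx
      have c1 := (hl x hx).continuousAt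
      have c2 := (hl1 x hx).continuousAt
      have c3 := (hp (γ - 1 - 1) x hx).continuousAt
      have c4 : ContinuousAt (fun x => ((Q x : ℝ) : ℂ)) x := by
        apply Complex.continuous_ofReal.continuousAt.comp
        exact continuousAt_const.add (continuousAt_const.mul
          (Real.continuousAt_rpow_const x _ (Or.inl hx0)))
      apply ContinuousAt.continuousWithinAt
      exact c3.mul (((continuousAt_const.mul ((continuousAt_const.mul c1).add c2)).add
        (continuousAt_const.mul c2)).add (c4.mul c1))
    exact hcu2.congr fun x hx => hddu x hx
  · intro x hx
    rw [hddu x hx, hdu x hx]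
    simp only [hu, hu1, hu2, hQ]
    rw [hxp γ x hx, hxp (γ - 1) x hx]
    have ha : a = 1 - 2 * γ := by rw [hγ]; ring
    rw [ha]
    push_cast
    ring
  · rw [aux_change]
    refine hint.congr (Filter.Eventually.of_forall fun t => ?_)
    simp only [hu, Real.log_exp, norm_mul, Complex.norm_real]
    rw [Real.norm_of_nonneg (Real.rpow_nonneg (Real.exp_pos t).le _), ← Real.exp_mul,
      ← Real.exp_mul, mul_pow, ← Real.exp_nat_mul]
    have : Real.exp ((2 - a - 2 * δ) * t) = Real.exp t * Real.exp ((2 : ℕ) * (t * γ)) *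
        Real.exp (t * -(2 * δ)) := by
      rw [← Real.exp_add, ← Real.exp_add]
      congr 1
      rw [hγ]; push_cast; ring
    rw [this]; ring

theorem aux_exist (m h β κ : ℝ) (hh : 0 < h) (hβ : 0 < β) (S : ℂ) (hS : S ^ 2 = m)
    (hS0 : 0 ≤ S.re) (hS1 : S.re = 0 ∨ S.im = 0) (hκ : S.re < κ) :
    ∃ w w1 : ℝ → ℂ, (∀ t, HasDerivAt w (w1 t) t) ∧
      (∀ t, HasDerivAt w1 (((m / 4 + h * Real.exp (2 * β * t) : ℝ) : ℂ) * w t) t) ∧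
      (∃ t, w t ≠ 0) ∧ Integrable (fun t => ‖w t‖ ^ 2 * Real.exp (κ * t)) := by
  set c := √h / β with hc
  have hcp : 0 < c := by have := Real.sqrt_pos.2 hh; positivity
  set z : ℝ → ℝ := fun t => c * Real.exp (β * t) with hz
  have hzp : ∀ t, 0 < z t := fun t => by simp only [hz]; positivity
  have hz' : ∀ t, HasDerivAt z (β * z t) t := by
    intro t
    refine ((((hasDerivAt_id t).const_mul β).exp).const_mul c).congr_deriv ?_
    simp only [hz, id]; ring
  set ν : ℂ := ((1 / (2 * β) : ℝ) : ℂ) * S with hν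
  have hνre : ν.re = 1 / (2 * β) * S.re := by rw [hν, Complex.re_ofReal_mul]
  have hνim : ν.im = 1 / (2 * β) * S.im := by rw [hν, Complex.im_ofReal_mul]
  have hνre0 : 0 ≤ ν.re := by rw [hνre]; positivity
  have hβ' : (β : ℂ) ≠ 0 := by exact_mod_cast hβ.ne'
  have hν2 : (β : ℂ) ^ 2 * ν ^ 2 = m / 4 := by
    rw [hν, mul_pow, hS]; push_cast; field_simp; ring
  have hJ : ∀ n t, HasDerivAt (fun t => auxJ ν n (z t))
      ((β * z t : ℝ) • (-auxJ ν (n + 1) (z t))) t := fun n t =>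
    (auxJ_deriv ν n (z t) (hzp t)).scomp t (hz' t)
  have hw : ∀ t, HasDerivAt (fun t => auxJ ν 0 (z t))
      (((-(β * z t) : ℝ) : ℂ) * auxJ ν 1 (z t)) t := by
    intro t
    refine (hJ 0 t).congr_deriv ?_
    rw [Complex.real_smul]; push_cast; ring
  refine ⟨fun t => auxJ ν 0 (z t), fun t => ((-(β * z t) : ℝ) : ℂ) * auxJ ν 1 (z t), hw, ?_, ?_, ?_⟩
  · intro t
    refine ((((hz' t).const_mul β).neg.ofReal_comp).mul (hJ 1 t)).congr_deriv ?_
    have h1 := auxJ_ode ν (z t) (hzp t)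
    have h2 : h * Real.exp (2 * β * t) = β ^ 2 * z t ^ 2 := by
      simp only [hz, hc]
      rw [mul_pow, div_pow, Real.sq_sqrt hh.le, ← Real.exp_nat_mul]
      field_simp
      push_cast; ring_nf
    rw [h2, Complex.real_smul]
    simp only [Pi.neg_apply]
    push_cast
    linear_combination (β : ℂ) ^ 2 * h1 + auxJ ν 0 (z t) * hν2
  · obtain ⟨z0, hz0, hne⟩ := auxJ_ne ν (by
      rcases hS1 with h | h
      · left; rw [hνre, h, mul_zero]
      · right; rw [hνim, h, mul_zero])
    refine ⟨Real.log (z0 / c) / β, ?_⟩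
    have : z (Real.log (z0 / c) / β) = z0 := by
      simp only [hz]
      rw [mul_div_cancel₀ _ hβ.ne', Real.exp_log (by positivity)]
      field_simp
    simp only [this]
    exact hne
  · have hwc : Continuous (fun t => auxJ ν 0 (z t)) :=
      continuous_iff_continuousAt.2 fun t => (hw t).continuousAt
    have hlt : ν.re < κ / (2 * β) := by
      rw [hνre, one_div_mul_eq_div]; gcongr
    have key : ∀ τ, ν.re < τ → ∃ C, ∀ t, ‖‖auxJ ν 0 (z t)‖ ^ 2 * Real.exp (κ * t)‖ ≤
        C * Real.exp ((κ - 2 * β * τ) * t) := by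
      intro τ hτ
      obtain ⟨C, hC, hb⟩ := auxJ_bound ν hνre0 τ hτ
      refine ⟨(C * c ^ (-τ)) ^ 2, fun t => ?_⟩
      rw [Real.norm_of_nonneg (by positivity)]
      have h1 := hb (z t) (hzp t)
      have h2 : z t ^ (-τ) = c ^ (-τ) * Real.exp (-β * τ * t) := by
        simp only [hz]
        rw [Real.mul_rpow hcp.le (Real.exp_pos _).le, ← Real.exp_mul]
        congr 2; ring
      rw [h2] at h1
      calc _ ≤ (C * (c ^ (-τ) * Real.exp (-β * τ * t))) ^ 2 * Real.exp (κ * t) := by gcongr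
        _ = (C * c ^ (-τ)) ^ 2 * (Real.exp (-β * τ * t) ^ 2 * Real.exp (κ * t)) := by ring
        _ = _ := by
          rw [← Real.exp_nat_mul, ← Real.exp_add]
          congr 2; push_cast; ring
    obtain ⟨C1, h1⟩ := key (κ / (2 * β) + 1) (by linarith)
    obtain ⟨C2, h2⟩ := key ((κ / (2 * β) + ν.re) / 2) (by linarith)
    refine aux_int_two (by fun_prop) (ε := 2 * β) (η := κ - 2 * β * ((κ / (2 * β) + ν.re) / 2))
      (C := C1) (D := C2) (by positivity) ?_ (fun t _ => ?_) (fun t _ => h2 t)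
    · have h3 : κ = 2 * β * (κ / (2 * β)) := by field_simp
      have h4 : 0 < 2 * β * ((κ / (2 * β) - ν.re) / 2) := by
        have : 0 < κ / (2 * β) - ν.re := by linarith
        positivity
      calc 0 < 2 * β * ((κ / (2 * β) - ν.re) / 2) := h4
        _ = 2 * β * (κ / (2 * β)) - 2 * β * ((κ / (2 * β) + ν.re) / 2) := by ring
        _ = _ := by rw [← h3]
    · have h3 : κ - 2 * β * (κ / (2 * β) + 1) = -(2 * β) := by field_simp; ring
      have := h1 t
      rwa [h3] at this

/-- Let `μ = (a−1)² − 4b` and `λ₋ = ((1−a) − √μ)/2` (principal square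
root). The Bessel-type equation `x² u'' + a x u' + (b − h x^{2β}) u = 0` on `(0,∞)` has a
nonzero twice continuously differentiable solution with `∫₀^∞ |u|² x^{−2δ} dx < ∞`
if and only if `Re λ₋ − δ > −1/2`; equivalently, `T = x²∂ₓ² + a x ∂ₓ + (b − h x^{2β})` is
injective on `x^δ L²((0,∞), dx)` if and only if `Re λ₋ ≤ δ − 1/2`. -/
theorem bessel_type_kernel_iff (a b δ h β : ℝ) (hh : 0 < h) (hβ : 0 < β) :
    (∃ u : ℝ → ℂ,
      (∃ x ∈ Ioi (0 : ℝ), u x ≠ 0) ∧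
      ContDiffOn ℝ 2 u (Ioi 0) ∧
      (∀ x ∈ Ioi (0 : ℝ),
        ((x ^ 2 : ℝ) : ℂ) * deriv (deriv u) x + ((a * x : ℝ) : ℂ) * deriv u x
          + ((b - h * x ^ (2 * β) : ℝ) : ℂ) * u x = 0) ∧
      IntegrableOn (fun x : ℝ => ‖u x‖ ^ 2 * x ^ (-(2 * δ))) (Ioi 0)) ↔
    (((1 - (a : ℂ)) - (((a - 1) ^ 2 - 4 * b : ℝ) : ℂ) ^ (1/2 : ℂ)) / 2).re - δ > -(1/2) := by
  obtain ⟨S, hS, hS2, hS0, hS1⟩ := aux_sqrt ((a - 1) ^ 2 - 4 * b)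
  rw [hS]
  have hre : (((1 - (a : ℂ)) - S) / 2).re = ((1 - a) - S.re) / 2 := by
    have e : ((1 - (a : ℂ)) - S) / 2 = ((1 / 2 : ℝ) : ℂ) * ((1 - (a : ℂ)) - S) := by
      push_cast; ring
    rw [e, Complex.re_ofReal_mul]
    simp; ring
  rw [hre]
  constructor
  · rintro ⟨u, ⟨x0, hx0, hux⟩, hu, hode, hint⟩
    obtain ⟨L, hL, hLne⟩ : ∃ L : ℂ →L[ℝ] ℝ, (∀ z, |L z| ≤ ‖z‖) ∧ L (u x0) ≠ 0 := by
      by_cases h1 : (u x0).re = 0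
      · refine ⟨Complex.imCLM, fun z => Complex.abs_im_le_norm z, fun h2 => hux ?_⟩
        exact Complex.ext h1 h2
      · exact ⟨Complex.reCLM, fun z => Complex.abs_re_le_norm z, h1⟩
    obtain ⟨w, w1, hw, hw1, hne, hi⟩ :=
      aux_forward a b δ h β u L hL ⟨x0, hx0, hLne⟩ hu hode hint
    rcases hS1 with ⟨hm, _, hr⟩ | ⟨hm, hr⟩
    · have := aux_B1 h β (2 - a - 2 * δ) (S.re / 2) hh hβ (by linarith) w w1 hw (fun t => by
        refine (hw1 t).congr_deriv ?_
        rw [← hr]; ring) hne hi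
      linarith
    · have := aux_B2 h β (2 - a - 2 * δ) (√(-((a - 1) ^ 2 - 4 * b) / 4)) hh hβ
        (Real.sqrt_pos.2 (by linarith)) w w1 hw (fun t => by
        refine (hw1 t).congr_deriv ?_
        rw [Real.sq_sqrt (by linarith)]; ring) hne hi
      rw [hr]
      linarith
  · intro hlt
    obtain ⟨w, w1, hw, hw1, hne, hi⟩ := aux_exist ((a - 1) ^ 2 - 4 * b) h β (2 - a - 2 * δ) hh hβ S
      hS2 hS0 (by
        rcases hS1 with ⟨_, h1, _⟩ | ⟨_, h1⟩
        · exact Or.inr h1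
        · exact Or.inl h1) (by linarith)
    exact aux_backward a b δ h β w w1 hw hw1 hne hi
end
end

section
/- Let α > −1 be real, n ≥ 1 an integer, c ∈ ℝ, and σ < 0. If u : (0,∞) → ℂ is twice continuously differentiable, satisfies the ODE x² u''(x) − αn · x u'(x) + (cαn(αn + α + 2) + σ x^{2(1+α)}) u(x) = 0 for all x > 0, and ∫₀^∞ |u(x)|² x^{−(4+αn)} dx < ∞, then u is identically zero. (That is, the Fourier-transformed normal operator of x²(Δ − cS) on the α-Grushin model is injective on x^{2+αn/2} L²((0,∞), dx) for all such parameters.) -/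
open MeasureTheory Complex Real Set

noncomputable section

lemma aux_infinite {f : ℝ → ℝ} (hf : Integrable f) {S : Set ℝ} (hS : MeasurableSet S)
    (hSi : volume S = ⊤) {c : ℝ} (hc : 0 < c) (h : ∀ t ∈ S, c ≤ f t) : False := by
  have h1 : IntegrableOn (fun _ : ℝ => c) S := by
    refine Integrable.mono' (hf.integrableOn (s := S)) (by fun_prop) ?_
    refine (ae_restrict_iff' hS).2 (Filter.Eventually.of_forall fun t ht => ?_)
    rw [Real.norm_eq_abs, abs_of_pos hc]; exact h t ht
  rw [integrableOn_const_iff] at h1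
  rcases h1 with h1 | h1
  · exact hc.ne' (by simpa using h1)
  · rw [hSi] at h1; exact lt_irrefl _ h1

lemma aux_mono_s6 {f f' : ℝ → ℝ} (hf : ∀ t, HasDerivAt f (f' t) t) {a b : ℝ} (hab : a ≤ b)
    (h : ∀ t, a ≤ t → t ≤ b → 0 ≤ f' t) : f a ≤ f b := by
  have : MonotoneOn f (Icc a b) := by
    apply monotoneOn_of_deriv_nonneg (convex_Icc a b)
    · exact fun t _ => (hf t).continuousAt.continuousWithinAt
    · exact fun t _ => (hf t).differentiableAt.differentiableWithinAt
    · intro t ht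
      rw [interior_Icc] at ht
      rw [(hf t).deriv]; exact h t ht.1.le ht.2.le
  exact this (left_mem_Icc.2 hab) (right_mem_Icc.2 hab) hab

lemma aux_left {p p1 : ℝ → ℝ} (hp : ∀ t, HasDerivAt p (p1 t) t) (h0 : ∀ t, 0 ≤ p t)
    (hint : Integrable fun t => p t * rexp (-2 * t)) {δ t1 : ℝ} (hδ : 0 < δ)
    (h : ∀ t ≤ t1, p1 t ≤ -δ) : False := by
  refine aux_infinite hint (S := Iic (t1 - 1)) measurableSet_Iic Real.volume_Iic
    (c := δ * rexp (-2 * (t1 - 1))) (by positivity) ?_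
  intro t ht
  have ht' : t ≤ t1 - 1 := ht
  have hd : ∀ s, HasDerivAt (fun s => -p s - δ * s) (-p1 s - δ * 1) s := fun s =>
    (hp s).neg.sub ((hasDerivAt_id s).const_mul δ)
  have h2 := aux_mono_s6 hd (show t ≤ t1 by linarith) (fun s _ hs => by linarith [h s hs])
  have h3 : δ ≤ p t := by
    nlinarith [h0 t1]
  have h4 : rexp (-2 * (t1 - 1)) ≤ rexp (-2 * t) := Real.exp_le_exp.2 (by linarith)
  exact mul_le_mul h3 h4 (Real.exp_pos _).le (h0 t)

lemma aux_core (w w1 : ℝ → ℝ) (l s β : ℝ) (hs : 0 < s) (hβ : 0 < β)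
    (hw : ∀ t, HasDerivAt w (w1 t) t)
    (hw1 : ∀ t, HasDerivAt w1 ((l + s * rexp (2 * β * t)) * w t) t)
    (hint : Integrable fun t => w t ^ 2 * rexp (-2 * t)) : ∀ t, w t = 0 := by
  set q : ℝ → ℝ := fun t => l + s * rexp (2 * β * t) with hq
  set p : ℝ → ℝ := fun t => w t ^ 2 with hpdef
  set p1 : ℝ → ℝ := fun t => 2 * (w t * w1 t) with hp1def
  set p2 : ℝ → ℝ := fun t => 2 * w1 t ^ 2 + 2 * q t * p t with hp2def
  have hp0 : ∀ t, 0 ≤ p t := fun t => sq_nonneg _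
  have hp : ∀ t, HasDerivAt p (p1 t) t := fun t => by
    refine HasDerivAt.congr_deriv ((hw t).pow 2) ?_
    simp only [hp1def]; push_cast; ring
  have hp1 : ∀ t, HasDerivAt p1 (p2 t) t := fun t => by
    refine HasDerivAt.congr_deriv (((hw t).mul (hw1 t)).const_mul 2) ?_
    simp only [hp2def, hpdef, hq]; ring
  have hqd : ∀ t, HasDerivAt q (s * (rexp (2 * β * t) * (2 * β))) t := fun t => by
    have : HasDerivAt (fun t => 2 * β * t) (2 * β) t := by
      simpa using (hasDerivAt_id t).const_mul (2 * β)
    exact (this.exp.const_mul s).const_add l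
  have hE : ∀ t, HasDerivAt (fun t => q t * p t - w1 t ^ 2)
      (s * (rexp (2 * β * t) * (2 * β)) * p t) t := fun t => by
    refine HasDerivAt.congr_deriv (((hqd t).mul (hp t)).sub ((hw1 t).pow 2)) ?_
    simp only [hp1def, hq]; push_cast; ring
  have hlq : ∀ t, l ≤ q t := fun t => by
    simp only [hq]; have := mul_pos hs (Real.exp_pos (2 * β * t)); linarith
  have hpc : Continuous p := continuous_iff_continuousAt.2 fun t => (hp t).continuousAt
  -- energy nonpositive
  have step1 : ∀ t, w1 t ^ 2 ≤ q t * p t := by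
    intro t0
    by_contra! hcon
    set E0 := w1 t0 ^ 2 - q t0 * p t0 with hE0
    have hE0pos : 0 < E0 := by rw [hE0]; linarith
    have hEt : ∀ t ≤ t0, E0 ≤ w1 t ^ 2 - q t * p t := fun t ht => by
      have := aux_mono_s6 hE ht (fun r _ _ => by have := hp0 r; positivity)
      linarith
    have hpI : IntegrableOn p (Iic t0) := by
      refine Integrable.mono' ((hint.integrableOn (s := Iic t0)).const_mul (rexp (2 * t0)))
        hpc.aestronglyMeasurable ?_
      refine (ae_restrict_iff' measurableSet_Iic).2 (Filter.Eventually.of_forall fun t ht => ?_)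
      have ht' : t ≤ t0 := ht
      rw [Real.norm_eq_abs, abs_of_nonneg (hp0 t)]
      have h1 : 1 ≤ rexp (2 * t0) * rexp (-2 * t) := by
        rw [← Real.exp_add]; exact Real.one_le_exp (by linarith)
      have := hp0 t
      calc p t = p t * 1 := by ring
        _ ≤ p t * (rexp (2 * t0) * rexp (-2 * t)) := by gcongr
        _ = _ := by simp only [hpdef]; ring
    set I := ∫ t in Iic t0, p t with hI
    have hIb : ∀ t ≤ t0, ∫ r in t..t0, p r ≤ I := fun t ht => by
      rw [intervalIntegral.integral_of_le ht]
      exact setIntegral_mono_set hpI (Filter.Eventually.of_forall fun r => hp0 r)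
        (Filter.Eventually.of_forall fun r hr => hr.2)
    have hF : ∀ t, HasDerivAt (fun t => p1 t + 4 * |l| * (∫ r in t0..t, p r) - 2 * E0 * t)
        (p2 t + 4 * |l| * p t - 2 * E0 * 1) t := fun t =>
      ((hp1 t).add ((intervalIntegral.integral_hasDerivAt_right (hpc.intervalIntegrable _ _)
        (hpc.stronglyMeasurableAtFilter _ _) hpc.continuousAt).const_mul _)).sub
        ((hasDerivAt_id t).const_mul _)
    have hb : ∀ t ≤ t0, p1 t ≤ p1 t0 + 4 * |l| * I - 2 * E0 * (t0 - t) := fun t ht => by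
      have h1 := aux_mono_s6 hF ht (fun r _ hr => by
        have h2 := hEt r hr
        have h3 := mul_le_mul_of_nonneg_right ((neg_abs_le l).trans (hlq r)) (hp0 r)
        simp only [hp2def]; nlinarith)
      simp only [intervalIntegral.integral_same] at h1
      rw [intervalIntegral.integral_symm] at h1
      have h4 := mul_le_mul_of_nonneg_left (hIb t ht) (show 0 ≤ 4 * |l| by positivity)
      nlinarith
    set A := p1 t0 + 4 * |l| * I with hA
    refine aux_left hp hp0 hint one_pos (t1 := t0 - (|A| + 1) / (2 * E0)) ?_
    intro t ht
    have h5 : 0 ≤ (|A| + 1) / (2 * E0) := by positivity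
    have h6 := hb t (by linarith)
    have h7 : (|A| + 1) ≤ 2 * E0 * (t0 - t) := by
      have : (|A| + 1) / (2 * E0) ≤ t0 - t := by linarith
      rw [div_le_iff₀ (by positivity)] at this; linarith
    linarith [le_abs_self A]
  have hp2 : ∀ t, 0 ≤ p2 t := fun t => by
    have := step1 t; have := sq_nonneg (w1 t); simp only [hp2def]; nlinarith
  have step2 : ∀ t, 0 ≤ p1 t := by
    intro t1
    by_contra! hcon
    refine aux_left hp hp0 hint (δ := -p1 t1) (t1 := t1) (by linarith) ?_
    intro t ht
    have := aux_mono_s6 hp1 ht (fun r _ _ => hp2 r)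
    linarith
  by_contra! hcon
  obtain ⟨ta, hta⟩ := hcon
  have hpa : 0 < p ta := by simp only [hpdef]; positivity
  -- large t
  obtain ⟨T, hTa, hT⟩ : ∃ T, ta ≤ T ∧ ∀ t, T ≤ t → 2 ≤ q t := by
    refine ⟨max ta ((2 + |l|) / s / (2 * β)), le_max_left _ _, fun t ht => ?_⟩
    have h1 : (2 + |l|) / s / (2 * β) ≤ t := (le_max_right _ _).trans ht
    rw [div_le_iff₀ (by positivity)] at h1
    have h2 := Real.add_one_le_exp (2 * β * t)
    have h3 : (2 + |l|) / s ≤ rexp (2 * β * t) := by linarith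
    rw [div_le_iff₀ hs] at h3
    simp only [hq]
    linarith [neg_abs_le l]
  have hpT : 0 < p T := lt_of_lt_of_le hpa (aux_mono_s6 hp hTa fun r _ _ => step2 r)
  have hexp : ∀ k t : ℝ, HasDerivAt (fun t => rexp (k * t)) (rexp (k * t) * k) t := fun k t => by
    have : HasDerivAt (fun t => k * t) k t := by
      simpa using (hasDerivAt_id t).const_mul k
    exact this.exp
  set h0 := rexp (-2 * T) * (p1 T + 2 * p T) with hh0
  have hh0pos : 0 < h0 := by have := step2 T; positivity
  have hh : ∀ t, T ≤ t → h0 ≤ rexp (-2 * t) * (p1 t + 2 * p t) := fun t ht => by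
    refine aux_mono_s6 (fun r => (hexp (-2) r).mul ((hp1 r).add ((hp r).const_mul 2))) ht ?_
    intro r hr _
    have h1 := mul_le_mul_of_nonneg_right (hT r hr) (hp0 r)
    have h2 : 0 ≤ p2 r - 4 * p r := by
      have := sq_nonneg (w1 r)
      simp only [hp2def]; nlinarith
    have := mul_nonneg (Real.exp_pos (-2 * r)).le h2
    simp only [Pi.add_apply]
    nlinarith
  set C := h0 / 4 * rexp (4 * T) with hC
  have hlow : ∀ t, T ≤ t → h0 / 4 * rexp (4 * t) - C ≤ rexp (2 * t) * p t := fun t ht => by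
    have h1 := aux_mono_s6 (fun r => ((hexp 2 r).mul (hp r)).sub ((hexp 4 r).const_mul (h0 / 4))) ht (by
      intro r hr _
      have h2 := mul_le_mul_of_nonneg_left (hh r hr) (Real.exp_pos (4 * r)).le
      have h3 : rexp (4 * r) * (rexp (-2 * r) * (p1 r + 2 * p r))
          = rexp (2 * r) * (p1 r + 2 * p r) := by
        rw [← mul_assoc, ← Real.exp_add]; ring_nf
      rw [h3] at h2
      nlinarith)
    simp only [Pi.sub_apply, Pi.mul_apply] at h1
    have := mul_nonneg (Real.exp_pos (2 * T)).le (hp0 T)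
    linarith
  refine aux_infinite hint (S := Ici (T + 1)) measurableSet_Ici Real.volume_Ici
    (c := h0 / 8) (by positivity) ?_
  intro t ht
  have ht' : T + 1 ≤ t := ht
  have h1 := mul_le_mul_of_nonneg_left (hlow t (by linarith)) (Real.exp_pos (-4 * t)).le
  have h2 : rexp (-4 * t) * (rexp (2 * t) * p t) = p t * rexp (-2 * t) := by
    rw [← mul_assoc, ← Real.exp_add, mul_comm]; ring_nf
  have h3 : rexp (-4 * t) * (h0 / 4 * rexp (4 * t) - C)
      = h0 / 4 * (1 - rexp (4 * (T - t))) := by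
    have e1 : rexp (-4 * t) * rexp (4 * t) = 1 := by rw [← Real.exp_add]; simp
    have e2 : rexp (-4 * t) * rexp (4 * T) = rexp (4 * (T - t)) := by
      rw [← Real.exp_add]; ring_nf
    rw [hC, ← e2]; linear_combination (h0 / 4) * e1
  have h4 : rexp (4 * (T - t)) ≤ 1 / 2 := by
    have : rexp (4 * (T - t)) ≤ rexp (-1) := Real.exp_le_exp.2 (by linarith)
    have h5 : rexp (-1) ≤ 1 / 2 := by
      rw [Real.exp_neg, inv_eq_one_div]
      exact one_div_le_one_div_of_le (by norm_num) (by linarith [Real.add_one_le_exp (1:ℝ)])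
    linarith
  rw [h2, h3] at h1
  simp only [hpdef] at h1
  nlinarith

lemma aux_real (a α K σ : ℝ) (hα : -1 < α) (hσ : σ < 0) (f f1 f2 : ℝ → ℝ)
    (hf : ∀ x, 0 < x → HasDerivAt f (f1 x) x) (hf1 : ∀ x, 0 < x → HasDerivAt f1 (f2 x) x)
    (hode : ∀ x, 0 < x → x ^ 2 * f2 x - a * x * f1 x + (K + σ * x ^ (2 * (1 + α))) * f x = 0)
    (hint : IntegrableOn (fun x => f x ^ 2 * x ^ (-(4 + a))) (Ioi 0)) :
    ∀ x, 0 < x → f x = 0 := by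
  set b := (1 + a) / 2 with hb
  have hexp : ∀ t : ℝ, HasDerivAt (fun t => rexp (-b * t)) (rexp (-b * t) * (-b)) t := fun t => by
    have : HasDerivAt (fun t => -b * t) (-b) t := by
      simpa using (hasDerivAt_id t).const_mul (-b)
    exact this.exp
  have hg : ∀ t, HasDerivAt (fun t => f (rexp t)) (f1 (rexp t) * rexp t) t := fun t =>
    (hf _ (Real.exp_pos t)).comp t (Real.hasDerivAt_exp t)
  have hg1 : ∀ t, HasDerivAt (fun t => f1 (rexp t)) (f2 (rexp t) * rexp t) t := fun t =>
    (hf1 _ (Real.exp_pos t)).comp t (Real.hasDerivAt_exp t)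
  have key := aux_core (fun t => rexp (-b * t) * f (rexp t))
    (fun t => rexp (-b * t) * (f1 (rexp t) * rexp t - b * f (rexp t)))
    (b ^ 2 - K) (-σ) (1 + α) (by linarith) (by linarith) ?_ ?_ ?_
  · intro x hx
    have := key (Real.log x)
    rw [Real.exp_log hx] at this
    exact (mul_eq_zero.1 this).resolve_left (Real.exp_pos _).ne'
  · intro t
    refine HasDerivAt.congr_deriv ((hexp t).mul (hg t)) ?_
    ring
  · intro t
    refine HasDerivAt.congr_deriv ((hexp t).mul (((hg1 t).mul (Real.hasDerivAt_exp t)).sub ((hg t).const_mul b))) ?_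
    have h1 := hode _ (Real.exp_pos t)
    rw [← Real.exp_mul, show t * (2 * (1 + α)) = 2 * (1 + α) * t by ring] at h1
    have ha : a = 2 * b - 1 := by rw [hb]; ring
    rw [ha] at h1
    linear_combination (rexp (-b * t)) * h1
  · have h1 := (integrableOn_image_iff_integrableOn_abs_deriv_smul (s := univ) (f := rexp)
      (f' := rexp) MeasurableSet.univ (fun x _ => (Real.hasDerivAt_exp x).hasDerivWithinAt)
      Real.exp_injective.injOn (fun x => f x ^ 2 * x ^ (-(4 + a)))).1
      (by rw [image_univ, Real.range_exp]; exact hint)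
    rw [integrableOn_univ] at h1
    convert h1 using 2 with t
    rw [smul_eq_mul, abs_of_pos (Real.exp_pos t), ← Real.exp_mul]
    have e : rexp (-b * t) ^ 2 * rexp (-2 * t) = rexp t * rexp (t * (-(4 + a))) := by
      rw [← Real.exp_nat_mul, ← Real.exp_add, ← Real.exp_add, hb]
      congr 1; push_cast; ring
    linear_combination (f (rexp t)) ^ 2 * e

/-- For `α > −1`, `n ≥ 1`, `c ∈ ℝ` and `σ < 0`, any twice continuously
differentiable solution `u` on `(0,∞)` of
`x² u'' − αn·x u' + (cαn(αn+α+2) + σ x^{2(1+α)}) u = 0`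
with `∫₀^∞ |u(x)|² x^{−(4+αn)} dx < ∞` vanishes identically; i.e. the Fourier-transformed
normal operator of `x²(Δ − cS)` is injective on `x^{2+αn/2} L²((0,∞), dx)`. -/
theorem grushin_normal_operator_injective (α : ℝ) (hα : -1 < α) (n : ℕ) (hn : 1 ≤ n)
    (c σ : ℝ) (hσ : σ < 0) (u : ℝ → ℂ)
    (hu : ContDiffOn ℝ 2 u (Ioi 0))
    (hode : ∀ x ∈ Ioi (0 : ℝ),
      ((x ^ 2 : ℝ) : ℂ) * deriv (deriv u) x - ((α * n * x : ℝ) : ℂ) * deriv u x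
        + ((c * (α * n) * (α * n + α + 2) + σ * x ^ (2 * (1 + α)) : ℝ) : ℂ) * u x = 0)
    (hint : IntegrableOn (fun x : ℝ => ‖u x‖ ^ 2 * x ^ (-(4 + α * n))) (Ioi 0)) :
    ∀ x ∈ Ioi (0 : ℝ), u x = 0 := by
  have hd1 : ∀ x, 0 < x → HasDerivAt u (deriv u x) x := fun x hx =>
    ((hu.differentiableOn (by norm_num)).differentiableAt (Ioi_mem_nhds hx)).hasDerivAt
  have hd2 : ∀ x, 0 < x → HasDerivAt (deriv u) (deriv (deriv u) x) x := fun x hx => by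
    have h1 : ContDiffOn ℝ 1 (deriv u) (Ioi 0) :=
      hu.deriv_of_isOpen isOpen_Ioi (by norm_num)
    exact ((h1.differentiableOn (by norm_num)).differentiableAt (Ioi_mem_nhds hx)).hasDerivAt
  have main : ∀ L : ℂ →L[ℝ] ℝ, (∀ z, |L z| ≤ ‖z‖) → ∀ x, 0 < x → L (u x) = 0 := by
    intro L hL
    refine aux_real (α * n) α (c * (α * n) * (α * n + α + 2)) σ hα hσ (fun x => L (u x))
      (fun x => L (deriv u x)) (fun x => L (deriv (deriv u) x))
      (fun x hx => L.hasFDerivAt.comp_hasDerivAt x (hd1 x hx))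
      (fun x hx => L.hasFDerivAt.comp_hasDerivAt x (hd2 x hx)) ?_ ?_
    · intro x hx
      have h := congrArg L (hode x hx)
      rw [← Complex.real_smul, ← Complex.real_smul, ← Complex.real_smul] at h
      simpa only [map_add, map_sub, map_smul, smul_eq_mul, map_zero] using h
    · refine Integrable.mono' hint ?_ ?_
      · refine ContinuousOn.aestronglyMeasurable ?_ measurableSet_Ioi
        refine ContinuousOn.mul ((L.continuous.comp_continuousOn hu.continuousOn).pow 2) ?_
        exact fun x hx => (Real.continuousAt_rpow_const _ _
          (Or.inl (ne_of_gt hx))).continuousWithinAt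
      · refine (ae_restrict_iff' measurableSet_Ioi).2
          (Filter.Eventually.of_forall fun x hx => ?_)
        have hx' : 0 < x := hx
        have h2 : 0 ≤ x ^ (-(4 + α * n)) := Real.rpow_nonneg hx'.le _
        rw [Real.norm_eq_abs, abs_of_nonneg (by positivity)]
        refine mul_le_mul_of_nonneg_right ?_ h2
        rw [← sq_abs]
        exact pow_le_pow_left₀ (abs_nonneg _) (hL _) 2
  intro x hx
  apply Complex.ext
  · simpa using main Complex.reCLM (fun z => by simpa using Complex.abs_re_le_norm z) x hx
  · simpa using main Complex.imCLM (fun z => by simpa using Complex.abs_im_le_norm z) x hx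
end
end

section
/- Borel-type lemma for polyhomogeneous asymptotic expansions: let E ⊆ ℂ × ℕ be an index set, i.e., for every N ∈ ℝ the set {(s,p) ∈ E : Re s ≤ N} is finite. Let B be a (complex) Banach space and let coefficients c(s,p) ∈ B be given for each (s,p) ∈ E. Then there exists an infinitely differentiable function u : (0,1) → B such that for every N ∈ ℕ and every k ∈ ℕ with k ≤ N, the k-th derivative of r ↦ u(r) − Σ_{(s,p) ∈ E, Re s ≤ N} r^s (log r)^p c(s,p) is O(r^{N−k}) as r → 0⁺. Moreover, if u' is another such function with the same asymptotic expansion, then u − u' vanishes to infinite order at 0: for every k ∈ ℕ and every N ∈ ℕ, ‖(u − u')^{(k)}(r)‖ = O(r^N) as r → 0⁺. -/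
open Asymptotics Topology Set

noncomputable section

/-- The partial sum `Σ_{(s,p) ∈ E, Re s ≤ N} r^s (log r)^p c(s,p)` of a polyhomogeneous
expansion with index set `E` and Banach-space-valued coefficients `c`. -/
def phgPartialSum {B : Type*} [NormedAddCommGroup B] [NormedSpace ℂ B]
    (E : Set (ℂ × ℕ)) (c : ℂ × ℕ → B) (N : ℝ) (r : ℝ) : B :=
  ∑ᶠ q ∈ {q ∈ E | q.1.re ≤ N}, ((r : ℂ) ^ q.1 * (Real.log r : ℂ) ^ q.2) • c q

/-- `u` admits the polyhomogeneous asymptotic expansion `Σ_{(s,p)∈E} r^s (log r)^p c(s,p)`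
as `r → 0⁺`: for every `N` and every `k ≤ N`, the `k`-th derivative of the difference
between `u` and the partial sum over `Re s ≤ N` is `O(r^{N−k})` as `r → 0⁺`. -/
def HasPhgExpansion {B : Type*} [NormedAddCommGroup B] [NormedSpace ℂ B]
    (E : Set (ℂ × ℕ)) (c : ℂ × ℕ → B) (u : ℝ → B) : Prop :=
  ∀ N : ℕ, ∀ k : ℕ, k ≤ N →
    (fun r : ℝ => iteratedDeriv k (fun t : ℝ => u t - phgPartialSum E c N t) r)
      =O[𝓝[>] (0 : ℝ)] fun r : ℝ => r ^ ((N : ℝ) - (k : ℝ))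


/-- Symbol class. -/
def PSym {F : Type*} [NormedAddCommGroup F] [NormedSpace ℝ F] (f : ℝ → F) (a : ℝ) : Prop :=
  ContDiffOn ℝ (⊤ : ℕ∞) f (Ioi 0) ∧
    ∀ k : ℕ, (fun r : ℝ => iteratedDeriv k f r) =O[𝓝[>] (0 : ℝ)] fun r : ℝ => r ^ (a - (k : ℝ))

/-- Monomial. -/
def pmon (s : ℂ) (p : ℕ) (r : ℝ) : ℂ := (r : ℂ) ^ s * (Real.log r : ℂ) ^ p

lemma cda {F : Type*} [NormedAddCommGroup F] [NormedSpace ℝ F] {f : ℝ → F}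
    (hf : ContDiffOn ℝ (⊤ : ℕ∞) f (Ioi 0)) {r : ℝ} (hr : 0 < r) (k : ℕ) : ContDiffAt ℝ k f r :=
  ((hf.contDiffAt (Ioi_mem_nhds hr)).of_le (by exact_mod_cast le_top))

lemma pmon_eq (s : ℂ) (p : ℕ) {r : ℝ} (hr : 0 < r) :
    pmon s p r = Complex.exp (s * (Real.log r : ℂ)) * (Real.log r : ℂ) ^ p := by
  unfold pmon
  rw [Complex.cpow_def_of_ne_zero (by exact_mod_cast hr.ne'), Complex.ofReal_log hr.le, mul_comm s]

lemma pmon_contDiffOn (s : ℂ) (p : ℕ) : ContDiffOn ℝ (⊤ : ℕ∞) (pmon s p) (Ioi 0) := by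
  have hl : ContDiffOn ℝ (⊤ : ℕ∞) (fun r : ℝ => (Real.log r : ℂ)) (Ioi 0) := by
    have h1 : ContDiffOn ℝ (⊤ : ℕ∞) Real.log (Ioi 0) :=
      Real.contDiffOn_log.mono (fun x hx => ne_of_gt hx)
    exact Complex.ofRealCLM.contDiff.comp_contDiffOn h1
  have h : ContDiffOn ℝ (⊤ : ℕ∞) (fun r : ℝ => Complex.exp (s * (Real.log r : ℂ)) * (Real.log r : ℂ) ^ p) (Ioi 0) := by
    refine ContDiffOn.mul (ContDiffOn.cexp (contDiffOn_const.mul hl)) (hl.pow p)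
  exact h.congr (fun r hr => pmon_eq s p hr)

lemma pmon_deriv (s : ℂ) (p : ℕ) {r : ℝ} (hr : 0 < r) :
    deriv (pmon s p) r = s * pmon (s - 1) p r + p * pmon (s - 1) (p - 1) r := by
  have hl : HasDerivAt (fun r : ℝ => (Real.log r : ℂ)) ((r⁻¹ : ℝ) : ℂ) r :=
    (Real.hasDerivAt_log hr.ne').ofReal_comp
  have h := ((hl.const_mul s).cexp).mul (hl.pow p)
  have he : pmon s p =ᶠ[𝓝 r] (fun r : ℝ => Complex.exp (s * (Real.log r : ℂ))) * (fun r : ℝ => (Real.log r : ℂ)) ^ p := by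
    filter_upwards [Ioi_mem_nhds hr] with x hx
    exact pmon_eq s p hx
  rw [he.deriv_eq, h.deriv, pmon_eq _ _ hr, pmon_eq _ _ hr]
  have : Complex.exp ((s - 1) * (Real.log r : ℂ)) = Complex.exp (s * (Real.log r : ℂ)) * ((r⁻¹ : ℝ) : ℂ) := by
    rw [sub_mul, one_mul, Complex.exp_sub, ← Complex.ofReal_exp, Real.exp_log hr]
    push_cast
    rw [div_eq_mul_inv]
  rw [this]
  simp only [Pi.pow_apply]
  ring

lemma pmon_isBigO (s : ℂ) (p : ℕ) (a : ℝ) (ha : a < s.re) :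
    (pmon s p) =O[𝓝[>] (0 : ℝ)] fun r : ℝ => r ^ a := by
  have h := (isLittleO_abs_log_rpow_rpow_nhdsGT_zero (p : ℝ) (s := a - s.re) (by linarith)).isBigO
  have h2 := (isBigO_refl (fun r : ℝ => r ^ s.re) (𝓝[>] (0 : ℝ))).mul h
  refine IsBigO.trans (IsBigO.of_bound 1 ?_) (h2.trans (IsBigO.of_bound 1 ?_))
  · filter_upwards [self_mem_nhdsWithin] with r hr
    have hr : 0 < r := hr
    simp only [pmon, norm_mul, norm_pow, Complex.norm_real, Real.norm_eq_abs, one_mul,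
      Complex.norm_cpow_eq_rpow_re_of_pos hr, Real.rpow_natCast, abs_abs]
    gcongr
    exact le_abs_self _
  · filter_upwards [self_mem_nhdsWithin] with r hr
    have hr : 0 < r := hr
    rw [← Real.rpow_add hr]
    simp

lemma pmon_bound (k : ℕ) : ∀ (s : ℂ) (p : ℕ) (a : ℝ), a < s.re →
    (fun r : ℝ => iteratedDeriv k (pmon s p) r) =O[𝓝[>] (0 : ℝ)] fun r : ℝ => r ^ (a - (k : ℝ)) := by
  induction k with
  | zero => 
    intro s p a ha
    simpa using pmon_isBigO s p a ha
  | succ k ih =>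
    intro s p a ha
    have h1 := ih (s - 1) p (a - 1) (by simpa using ha)
    have h2 := ih (s - 1) (p - 1) (a - 1) (by simpa using ha)
    have h := (h1.const_mul_left s).add (h2.const_mul_left (p : ℂ))
    refine (h.congr' ?_ ?_)
    · filter_upwards [self_mem_nhdsWithin] with r hr
      have hr : 0 < r := hr
      rw [iteratedDeriv_succ']
      have he : deriv (pmon s p) =ᶠ[𝓝 r] fun r => s * pmon (s - 1) p r + p * pmon (s - 1) (p - 1) r := by
        filter_upwards [Ioi_mem_nhds hr] with x hx
        exact pmon_deriv s p hx
      have c1 := cda (pmon_contDiffOn (s - 1) p) hr k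
      have c2 := cda (pmon_contDiffOn (s - 1) (p - 1)) hr k
      rw [he.iteratedDeriv_eq, iteratedDeriv_fun_add (contDiffAt_const.mul c1) (contDiffAt_const.mul c2),
        iteratedDeriv_const_mul _ c1, iteratedDeriv_const_mul _ c2]
    · filter_upwards with r
      push_cast
      congr 1
      ring

lemma PSym.sum {F ι : Type*} [NormedAddCommGroup F] [NormedSpace ℝ F] {I : Finset ι} {f : ι → ℝ → F} {a : ℝ}
    (h : ∀ i ∈ I, PSym (f i) a) : PSym (fun r => ∑ i ∈ I, f i r) a := by
  refine ⟨ContDiffOn.sum fun i hi => (h i hi).1, fun k => ?_⟩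
  have := IsBigO.sum (fun i hi => (h i hi).2 k)
  refine this.congr' ?_ Filter.EventuallyEq.rfl
  filter_upwards [self_mem_nhdsWithin] with r hr
  rw [iteratedDeriv_fun_sum (fun i hi => cda (h i hi).1 hr k), Finset.sum_apply]

lemma pmon_PSym {B : Type*} [NormedAddCommGroup B] [NormedSpace ℂ B] (s : ℂ) (p : ℕ) (c : B) (a : ℝ)
    (ha : a < s.re) : PSym (fun r => pmon s p r • c) a := by
  refine ⟨(pmon_contDiffOn s p).smul contDiffOn_const, fun k => ?_⟩
  refine IsBigO.trans (IsBigO.of_bound ‖c‖ ?_) (pmon_bound k s p a ha)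
  filter_upwards [self_mem_nhdsWithin] with r hr
  rw [iteratedDeriv_smul_const (cda (pmon_contDiffOn s p) hr k), norm_smul, mul_comm]

lemma phg_contDiffOn {B : Type*} [NormedAddCommGroup B] [NormedSpace ℂ B]
    (E : Set (ℂ × ℕ)) (hE : ∀ N : ℝ, {q ∈ E | q.1.re ≤ N}.Finite) (c : ℂ × ℕ → B) (N : ℝ) :
    ContDiffOn ℝ (⊤ : ℕ∞) (phgPartialSum E c N) (Ioi 0) := by
  have : phgPartialSum E c N = fun r => ∑ q ∈ (hE N).toFinset, pmon q.1 q.2 r • c q := by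
    funext r
    rw [phgPartialSum, finsum_mem_eq_finite_toFinset_sum _ (hE N)]
    rfl
  rw [this]
  exact ContDiffOn.sum fun q _ => (pmon_contDiffOn q.1 q.2).smul contDiffOn_const

lemma phg_diff {B : Type*} [NormedAddCommGroup B] [NormedSpace ℂ B]
    (E : Set (ℂ × ℕ)) (hE : ∀ N : ℝ, {q ∈ E | q.1.re ≤ N}.Finite) (c : ℂ × ℕ → B) (N M : ℝ) (h : N ≤ M) :
    PSym (fun r => phgPartialSum E c M r - phgPartialSum E c N r) N := by
  classical
  have : (fun r => phgPartialSum E c M r - phgPartialSum E c N r) =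
      fun r => ∑ q ∈ (hE M).toFinset \ (hE N).toFinset, pmon q.1 q.2 r • c q := by
    funext r
    rw [phgPartialSum, finsum_mem_eq_finite_toFinset_sum _ (hE M), phgPartialSum,
      finsum_mem_eq_finite_toFinset_sum _ (hE N), sub_eq_iff_eq_add, 
      ← Finset.sum_sdiff (s₁ := (hE N).toFinset) (s₂ := (hE M).toFinset)]
    · rfl
    · intro q hq
      simp only [Set.Finite.mem_toFinset, mem_ofPred_eq] at hq ⊢
      exact ⟨hq.1, hq.2.trans h⟩
  rw [this]
  apply PSym.sum
  intro q hq
  simp only [Finset.mem_sdiff, Set.Finite.mem_toFinset, mem_ofPred_eq, not_and, not_le] at hq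
  exact pmon_PSym _ _ _ _ (hq.2 hq.1.1)

/-- Cutoff. -/
def pcut (x : ℝ) : ℝ := Real.smoothTransition (2 - x)

lemma pcut_contDiff : ContDiff ℝ (⊤ : ℕ∞) pcut :=
  Real.smoothTransition.contDiff.comp (contDiff_const.sub contDiff_id)

lemma pcut_bound (k : ℕ) : ∃ C : ℝ, 0 ≤ C ∧ ∀ x : ℝ, 0 < x → |x ^ k * iteratedDeriv k pcut x| ≤ C := by
  have hc : Continuous (fun x : ℝ => x ^ k * iteratedDeriv k pcut x) :=
    (continuous_pow k).mul (pcut_contDiff.continuous_iteratedDeriv k (by exact_mod_cast le_top))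
  obtain ⟨C, hC⟩ := (isCompact_Icc (a := (0 : ℝ)) (b := 2)).exists_bound_of_continuousOn hc.continuousOn
  refine ⟨C, (norm_nonneg _).trans (hC 0 (by simp)), fun x hx => ?_⟩
  rcases le_or_gt x 2 with h | h
  · exact hC x ⟨hx.le, h⟩
  · have he : pcut =ᶠ[𝓝 x] fun _ => 0 := by
      filter_upwards [Ioi_mem_nhds h] with y hy
      have hy : 2 < y := hy
      exact Real.smoothTransition.zero_of_nonpos (by linarith)
    rw [he.iteratedDeriv_eq]
    simpa using (norm_nonneg _).trans (hC 0 (by simp))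

lemma pcut_scale (k : ℕ) {C : ℝ} (hC : ∀ x : ℝ, 0 < x → |x ^ k * iteratedDeriv k pcut x| ≤ C)
    {e r : ℝ} (he : 0 < e) (hr : 0 < r) :
    ‖iteratedDeriv k (fun x => pcut (e⁻¹ * x)) r‖ ≤ C * r ^ (-(k : ℝ)) := by
  rw [iteratedDeriv_comp_const_mul (pcut_contDiff.of_le (by exact_mod_cast le_top))]
  have h := hC (e⁻¹ * r) (by positivity)
  rw [Real.rpow_neg hr.le, Real.rpow_natCast, ← div_eq_mul_inv, le_div_iff₀ (by positivity)]
  refine le_trans (le_of_eq ?_) h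
  simp only [Real.norm_eq_abs]
  have h1 : r ^ k = |r ^ k| := (abs_of_pos (pow_pos hr k)).symm
  rw [h1, ← abs_mul]
  congr 1
  ring

lemma cut_lemma {F : Type*} [NormedAddCommGroup F] [NormedSpace ℝ F] {f : ℝ → F} {a : ℝ}
    (hf : PSym f a) (K : ℕ) {η : ℝ} (hη : 0 < η) :
    ∃ h : ℝ → F, ContDiffOn ℝ (⊤ : ℕ∞) h (Ioi 0) ∧ ∃ δ : ℝ, 0 < δ ∧ (∀ r, r < δ → h r = f r) ∧
      (∀ r, η ≤ r → h r = 0) ∧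
      ∀ k ≤ K, ∀ r, 0 < r → ‖iteratedDeriv k h r‖ ≤ η * r ^ (a - 1 - (k : ℝ)) := by
  choose C0 hC0 hC using pcut_bound
  have hD : ∀ k : ℕ, ∃ D : ℝ, 0 ≤ D ∧ ∀ᶠ r in 𝓝[>] (0 : ℝ), ‖iteratedDeriv k f r‖ ≤ D * r ^ (a - (k : ℝ)) := by
    intro k
    obtain ⟨D, hD0, hD⟩ := (hf.2 k).exists_nonneg
    refine ⟨D, hD0, ?_⟩
    filter_upwards [hD.bound, self_mem_nhdsWithin] with r h1 h2
    rwa [Real.norm_of_nonneg (Real.rpow_nonneg (le_of_lt h2) _)] at h1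
  choose D hD0 hD using hD
  have hev : ∀ᶠ r in 𝓝[>] (0 : ℝ), ∀ k ∈ Finset.range (K + 1), ‖iteratedDeriv k f r‖ ≤ D k * r ^ (a - (k : ℝ)) :=
    (Filter.eventually_all_finset _).2 fun k _ => hD k
  obtain ⟨δ, hδ0, hδ⟩ := mem_nhdsGT_iff_exists_Ioo_subset.1 hev
  have hδ0 : 0 < δ := hδ0
  set M : ℝ := ∑ k ∈ Finset.range (K + 1), ∑ i ∈ Finset.range (k + 1), (k.choose i : ℝ) * C0 i * D (k - i) with hM
  have hM0 : 0 ≤ M := Finset.sum_nonneg fun k _ => Finset.sum_nonneg fun i _ =>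
    mul_nonneg (mul_nonneg (by positivity) (hC0 i)) (hD0 _)
  obtain ⟨e, he, he1, he2, he3⟩ : ∃ e : ℝ, 0 < e ∧ 2 * e < δ ∧ 2 * e < η ∧ 2 * e * M ≤ η := by
    refine ⟨min (δ / 4) (min (η / 4) (η / (2 * (M + 1)))), by positivity, ?_, ?_, ?_⟩
    · linarith [min_le_left (δ / 4) (min (η / 4) (η / (2 * (M + 1))))]
    · linarith [(min_le_right (δ / 4) (min (η / 4) (η / (2 * (M + 1))))).trans (min_le_left _ _)]
    · have := (min_le_right (δ / 4) (min (η / 4) (η / (2 * (M + 1))))).trans (min_le_right _ _)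
      rw [le_div_iff₀ (by positivity)] at this
      have h0 : 0 < min (δ / 4) (min (η / 4) (η / (2 * (M + 1)))) := by positivity
      nlinarith
  have hz : ∀ r, 2 * e ≤ r → pcut (e⁻¹ * r) = 0 := by
    intro r hr
    apply Real.smoothTransition.zero_of_nonpos
    have : 2 ≤ e⁻¹ * r := by
      rw [inv_mul_eq_div, le_div_iff₀ he]; exact hr
    linarith
  have hcs : ContDiff ℝ (⊤ : ℕ∞) (fun x => pcut (e⁻¹ * x)) :=
    pcut_contDiff.comp (contDiff_const.mul contDiff_id)
  refine ⟨fun r => pcut (e⁻¹ * r) • f r, hcs.contDiffOn.smul hf.1, e, he, fun r hr => ?_,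
    fun r hr => ?_, fun k hk r hr => ?_⟩
  · have : pcut (e⁻¹ * r) = 1 := by
      apply Real.smoothTransition.one_of_one_le
      have : e⁻¹ * r ≤ 1 := by
        rw [inv_mul_eq_div, div_le_iff₀ he]; linarith
      linarith
    simp [this]
  · simp [hz r (by linarith)]
  · rcases le_or_gt r (2 * e) with h | h
    · have hL := norm_iteratedFDerivWithin_smul_le (hcs.contDiffOn (s := Ioi 0)) hf.1 (uniqueDiffOn_Ioi 0) (x := r) hr
        (n := k) (by exact_mod_cast le_top)
      simp only [norm_iteratedFDerivWithin_eq_norm_iteratedDerivWithin] at hL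
      simp only [iteratedDerivWithin_of_isOpen isOpen_Ioi (mem_Ioi.2 hr)] at hL
      refine hL.trans ?_
      have hs : ∀ i ∈ Finset.range (k + 1), (k.choose i : ℝ) * ‖iteratedDeriv i (fun x => pcut (e⁻¹ * x)) r‖ *
          ‖iteratedDeriv (k - i) f r‖ ≤ ((k.choose i : ℝ) * C0 i * D (k - i)) * r ^ (a - (k : ℝ)) := by
        intro i hi
        have hi' : i ≤ k := by simpa [Nat.lt_succ_iff] using hi
        have h1 := pcut_scale i (hC i) he hr
        have h2 := hδ (show r ∈ Ioo 0 δ from ⟨hr, by linarith⟩) (k - i) (by simp; omega)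
        have h3 : r ^ (a - (k : ℝ)) = r ^ (-(i : ℝ)) * r ^ (a - ((k - i : ℕ) : ℝ)) := by
          rw [← Real.rpow_add hr]
          congr 1
          push_cast [hi']
          ring
        calc _ ≤ (k.choose i : ℝ) * (C0 i * r ^ (-(i : ℝ))) * (D (k - i) * r ^ (a - ((k - i : ℕ) : ℝ))) := by
              have := hC0 i
              gcongr
          _ = _ := by rw [h3]; ring
      refine (Finset.sum_le_sum hs).trans ?_
      rw [← Finset.sum_mul]
      have hMk : ∑ i ∈ Finset.range (k + 1), (k.choose i : ℝ) * C0 i * D (k - i) ≤ M := by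
        rw [hM]
        refine Finset.single_le_sum (f := fun k => ∑ i ∈ Finset.range (k + 1), (k.choose i : ℝ) * C0 i * D (k - i))
          (fun k _ => Finset.sum_nonneg fun i _ =>
            mul_nonneg (mul_nonneg (by positivity) (hC0 i)) (hD0 _)) (by simp; omega)
      have h3 : r ^ (a - (k : ℝ)) = r * r ^ (a - 1 - (k : ℝ)) := by
        nth_rewrite 2 [← Real.rpow_one r]
        rw [← Real.rpow_add hr]
        congr 1
        ring
      rw [h3, ← mul_assoc]
      gcongr
      calc _ ≤ M * (2 * e) := by gcongr
        _ ≤ η := by linarith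
    · have he : (fun r => pcut (e⁻¹ * r) • f r) =ᶠ[𝓝 r] fun _ => 0 := by
        filter_upwards [Ioi_mem_nhds h] with y hy
        simp [hz y (le_of_lt hy)]
      rw [he.iteratedDeriv_eq]
      simp
      positivity

lemma borel_abs {F : Type*} [NormedAddCommGroup F] [NormedSpace ℝ F] (g : ℕ → ℝ → F)
    (hg : ∀ n : ℕ, PSym (g n) n) :
    ∃ v : ℝ → F, ContDiffOn ℝ (⊤ : ℕ∞) v (Ioi 0) ∧ ∀ N k : ℕ, k ≤ N →
      (fun r : ℝ => iteratedDeriv k (fun t => v t - ∑ n ∈ Finset.range N, g n t) r)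
        =O[𝓝[>] (0 : ℝ)] fun r : ℝ => r ^ ((N : ℝ) - (k : ℝ)) := by
  choose h hh1 δ hδ0 hδ hz hb using
    fun n : ℕ => cut_lemma (hg n) n (show (0 : ℝ) < (1 / 2) ^ n by positivity)
  have hloc : ∀ r : ℝ, 0 < r → ∃ m0 : ℕ, ∀ m ≥ m0, 
      (fun t => ∑' n, h n t) =ᶠ[𝓝 r] fun t => ∑ n ∈ Finset.range m, h n t := by
    intro r hr
    obtain ⟨m0, hm0⟩ := exists_pow_lt_of_lt_one hr (show (1 / 2 : ℝ) < 1 by norm_num)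
    refine ⟨m0, fun m hm => ?_⟩
    filter_upwards [Ioi_mem_nhds hm0] with t ht
    have ht : (1 / 2 : ℝ) ^ m0 < t := ht
    refine tsum_eq_sum fun n hn => hz n t (le_trans ?_ ht.le)
    simp only [Finset.mem_range, not_lt] at hn
    exact pow_le_pow_of_le_one (by norm_num) (by norm_num) (hm.trans hn)
  refine ⟨fun t => ∑' n, h n t, fun r hr => ?_, fun N k hk => ?_⟩
  · obtain ⟨m, hm⟩ := hloc r hr
    have : ContDiffAt ℝ (⊤ : ℕ∞) (fun t => ∑ n ∈ Finset.range m, h n t) r :=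
      ContDiffAt.sum fun n _ => (hh1 n).contDiffAt (Ioi_mem_nhds hr)
    exact (this.congr_of_eventuallyEq (hm m le_rfl)).contDiffWithinAt
  · have hev : ∀ᶠ r in 𝓝[>] (0 : ℝ), ∀ n ∈ Finset.range (N + 1), r < δ n :=
      (Filter.eventually_all_finset _).2 fun n _ => mem_nhdsWithin_of_mem_nhds (Iio_mem_nhds (hδ0 n))
    have hev1 : ∀ᶠ r in 𝓝[>] (0 : ℝ), r < 1 := mem_nhdsWithin_of_mem_nhds (Iio_mem_nhds one_pos)
    have hkey : (fun r : ℝ => iteratedDeriv k (fun t => ∑' n, h n t - ∑ n ∈ Finset.range N, g n t) r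
        - iteratedDeriv k (g N) r) =O[𝓝[>] (0 : ℝ)] fun r : ℝ => r ^ ((N : ℝ) - (k : ℝ)) := by
      refine IsBigO.of_bound 2 ?_
      filter_upwards [hev, hev1, self_mem_nhdsWithin] with r h1 h2 hr
      have hr : 0 < r := hr
      obtain ⟨m0, hm0⟩ := hloc r hr
      set m := max m0 (N + 1) with hm
      have hv := hm0 m (le_max_left _ _)
      have hnear : ∀ᶠ t in 𝓝 r, ∀ n ∈ Finset.range (N + 1), t < δ n :=
        (Filter.eventually_all_finset _).2 fun n hn => Iio_mem_nhds (h1 n hn)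
      have heq : (fun t => ∑' n, h n t - ∑ n ∈ Finset.range N, g n t) =ᶠ[𝓝 r]
          fun t => g N t + ∑ n ∈ Finset.Ico (N + 1) m, h n t := by
        filter_upwards [hv, hnear] with t ht1 ht2
        rw [ht1, ← Finset.sum_range_add_sum_Ico _ (le_max_right m0 (N + 1)), Finset.sum_range_succ,
          Finset.sum_congr rfl (fun n hn => hδ n t (ht2 n (by simp at hn ⊢; omega))),
          hδ N t (ht2 N (by simp))]
        abel
      have c2 : ∀ n, ContDiffAt ℝ k (h n) r := fun n => cda (hh1 n) hr k
      rw [heq.iteratedDeriv_eq, iteratedDeriv_fun_add (cda (hg N).1 hr k) (ContDiffAt.sum fun n _ => c2 n),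
        add_sub_cancel_left, iteratedDeriv_fun_sum (fun n _ => c2 n),
        Real.norm_of_nonneg (Real.rpow_nonneg hr.le _)]
      calc _ ≤ ∑ n ∈ Finset.Ico (N + 1) m, (1 / 2 : ℝ) ^ n * r ^ ((N : ℝ) - (k : ℝ)) := by
            refine norm_sum_le_of_le _ fun n hn => ?_
            have hn : N + 1 ≤ n := (Finset.mem_Ico.1 hn).1
            refine (hb n k (by omega) r hr).trans ?_
            gcongr ?_ * ?_
            refine Real.rpow_le_rpow_of_exponent_ge hr h2.le ?_
            have : (N : ℝ) + 1 ≤ n := by exact_mod_cast hn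
            linarith
        _ ≤ _ := by
            rw [← Finset.sum_mul]
            gcongr
            exact (summable_geometric_two.sum_le_tsum _ (fun _ _ => by positivity)).trans_eq
              tsum_geometric_two
    simpa using hkey.add ((hg N).2 k)

/-- **Borel-type lemma.** If `E ⊆ ℂ × ℕ` is an index set (every left
half-plane meets it in finitely many points) and `c(s,p) ∈ B` are coefficients in a
complex Banach space, then there is a smooth `u : (0,1) → B` with polyhomogeneous
expansion `Σ r^s (log r)^p c(s,p)`, and any two such functions differ by a function all of
whose derivatives vanish to infinite order at `0⁺`. -/
theorem borel_phg (E : Set (ℂ × ℕ)) (hE : ∀ N : ℝ, {q ∈ E | q.1.re ≤ N}.Finite)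
    (B : Type*) [NormedAddCommGroup B] [NormedSpace ℂ B] [CompleteSpace B]
    (c : ℂ × ℕ → B) :
    (∃ u : ℝ → B, ContDiffOn ℝ (⊤ : ℕ∞) u (Ioo 0 1) ∧ HasPhgExpansion E c u) ∧
    ∀ u u' : ℝ → B, ContDiffOn ℝ (⊤ : ℕ∞) u (Ioo 0 1) → HasPhgExpansion E c u →
      ContDiffOn ℝ (⊤ : ℕ∞) u' (Ioo 0 1) → HasPhgExpansion E c u' →
      ∀ k N : ℕ,
        (fun r : ℝ => iteratedDeriv k (fun t : ℝ => u t - u' t) r)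
          =O[𝓝[>] (0 : ℝ)] fun r : ℝ => r ^ (N : ℝ) := by
  constructor
  · obtain ⟨v, hv1, hv2⟩ := borel_abs
      (fun n r => phgPartialSum E c ((n + 1 : ℕ) : ℝ) r - phgPartialSum E c (n : ℝ) r)
      (fun n => phg_diff E hE c _ _ (by push_cast; linarith))
    have h0 := phg_contDiffOn E hE c ((0 : ℕ) : ℝ)
    refine ⟨fun t => phgPartialSum E c ((0 : ℕ) : ℝ) t + v t,
      (h0.add hv1).mono (fun x hx => hx.1), fun N k hk => ?_⟩
    refine (hv2 N k hk).congr_left fun r => ?_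
    congr 1
    funext t
    rw [Finset.sum_range_sub (fun n => phgPartialSum E c (n : ℝ) t), sub_sub_eq_add_sub, add_comm (v t)]
  · intro u u' hu hu1 hu' hu1' k N
    have h1 := (hu1 (N + k) k (by omega)).sub (hu1' (N + k) k (by omega))
    refine h1.congr' ?_ ?_
    · filter_upwards [Ioo_mem_nhdsGT (one_pos (α := ℝ))] with r hr
      have hS := cda (phg_contDiffOn E hE c ((N + k : ℕ) : ℝ)) hr.1 k
      have cu : ContDiffAt ℝ k u r :=
        (hu.contDiffAt (Ioo_mem_nhds hr.1 hr.2)).of_le (by exact_mod_cast le_top)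
      have cu' : ContDiffAt ℝ k u' r :=
        (hu'.contDiffAt (Ioo_mem_nhds hr.1 hr.2)).of_le (by exact_mod_cast le_top)
      rw [← iteratedDeriv_fun_sub (cu.sub hS) (cu'.sub hS)]
      congr 1
      funext t
      abel
    · filter_upwards with r
      push_cast
      congr 1
      ring
end
end
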